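/- arXiv:2510.12261 — 10 statements merged into one kernel-verified Lean document; each statement's English description precedes it below -/
import Mathlib

section
/- The subgroup G of the unit group of the matrix ring generated by the units λ·C_t and U_t for 1 ≤ t ≤ ℓ and D_{st} for 1 ≤ s < t ≤ ℓ is isomorphic, as a group, to the symplectic group Sp_{2ℓ}(ZMod r) (Mathlib's Matrix.symplecticGroup (Fin ℓ) (ZMod r)). -/
set_option linter.all false

section WeilSymplecticGeneration
open Matrix

variable {l : Type*} [Fintype l] [DecidableEq l]

lemma weil_exists_symm {R : Type*} [Field R]
    {A C : Matrix l l R} (hker : ∀ (x : l → R), (A • x = 0) → (C • x = 0) → x = 0)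
    (hsymm : Aᵀ * C = Cᵀ * A) :
    ∃ (X : Matrix l l R), X.IsSymm ∧ IsUnit (A + X * C) := by
  -- `C` is transformed into `P = fromBlocks 1 0 0 0` by invertible matrices `V` and `U`.
  rcases exists_rank_normal_form C with ⟨V, U, s, hV, hU, heq⟩
  set P := V * C * U with P_def; set Q := Vᵀ⁻¹ * A * U with Q_def
  set f := fun (x : Matrix l l R) ↦ x.submatrix s.symm s.symm
  have hf (x) : f x = x.submatrix s.symm s.symm := rfl
  have f_unit {x} : IsUnit x → IsUnit (f x) := (isUnit_submatrix_equiv ..).2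
  have f_mul (x y) : f (x * y) = f x * f y := submatrix_mul _ _ _ _ _ s.symm.bijective
  have _ : Invertible V := hV.invertible
  have _ : Invertible U := hU.invertible
  have _ : Invertible (f Vᵀ) := (f_unit (V.isUnit_transpose.2 hV)).invertible
  -- The hypothesis that the only vector annihilated by both matrices is 0, holds for `P` and `Q`.
  have con1 (x : Fin C.rank ⊕ Fin (Fintype.card l - C.rank) → R)
      (heq1 : (f Q) • x = 0) (heq2 : (f P) • x = 0) : x = 0 := by
    refine (f_unit hU).smul_left_cancel.1 ?_
    rw [f_mul, f_mul, mul_assoc, mul_smul, IsUnit.smul_eq_zero, mul_smul, hf,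
      smul_eq_mulVec, submatrix_mulVec_equiv, Equiv.symm_symm] at heq1 heq2
    · rw [Equiv.comp_symm_eq, Pi.zero_comp] at heq1 heq2
      exact s.surjective.injective_comp_right <| by simpa using hker _ heq1 heq2
    · exact f_unit hV
    · exact f_unit <| isUnit_nonsing_inv_iff.2 <| V.isUnit_transpose.2 hV
  -- The symmetry relation also holds for `P` and `Q`.
  have con2 : Qᵀ * P = Pᵀ * Q := by
    simp only [P_def, mul_assoc, transpose_mul, transpose_nonsing_inv, transpose_transpose, Q_def,
      inv_mul_cancel_left_of_invertible, mul_inv_cancel_left_of_invertible]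
    rw [← mul_assoc Aᵀ, hsymm, mul_assoc]
  replace con2 : (f Q).toBlocks₁₁ᵀ = (f Q).toBlocks₁₁ ∧ (f Q).toBlocks₁₂ = 0 := by
    apply_fun reindex s s at con2
    rw [reindex_apply, reindex_apply, ← hf, ← hf, f_mul, f_mul Pᵀ, heq, hf,
      ← transpose_submatrix, ← hf Q, ← (f Q).fromBlocks_toBlocks, hf (_)ᵀ, hf
      ((fromBlocks 1 0 0 0).submatrix _ _)] at con2
    simp [fromBlocks_transpose, fromBlocks_multiply] at con2; tauto
  -- The lower-right block of `Q` is invertible.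
  have con3 : IsUnit (f Q).toBlocks₂₂ := by
    refine mulVec_injective_iff_isUnit.1 ?_
    rw [← coe_mulVecLin, ← LinearMap.ker_eq_bot]
    refine ker_mulVecLin_eq_bot_iff.2 fun x hx ↦ Sum.elim_injective' <|
      (con1 _ ?_ ?_).trans Sum.elim_zero_zero.symm
    · rw [← (f Q).fromBlocks_toBlocks]; simp [hx, con2.2, fromBlocks_mulVec]
    · simp [hf, heq, fromBlocks_mulVec]
  set Y : Matrix (Fin C.rank ⊕ Fin (Fintype.card l - C.rank)) (Fin C.rank ⊕
    Fin (Fintype.card l - C.rank)) R := fromBlocks (1 - (f Q).toBlocks₁₁) 0 0 0 with Y_def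
  have hY_symm : Y.IsSymm := by
    rw [Y_def, isSymm_fromBlocks_iff]
    exact ⟨IsSymm.sub isSymm_one con2.1, by simp⟩
  -- We now take `X = Vᵀ * Y * V` and this gives the desired matrix `X.submatrix s s`.
  set X := (f Vᵀ) * Y * (f V) with X_def
  refine ⟨X.submatrix s s, IsSymm.submatrix ?_ s, (isUnit_submatrix_equiv s.symm s.symm).1 ?_⟩
  · simp_rw [X_def, Matrix.IsSymm, transpose_mul, hY_symm.eq, hf, transpose_submatrix,
      transpose_transpose, mul_assoc]
  · have heq' : f (A + X.submatrix s s * C) = (f Vᵀ) * (f Q + Y * (f P)) * f (U⁻¹) := by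
      simp_rw [hf, submatrix_add, Pi.add_apply, Q_def, P_def, ← hf, f_mul, hf, mul_add, ← mul_assoc,
        ← inv_submatrix_equiv, add_mul, mul_assoc _ (U.submatrix _ _), mul_inv_of_invertible]
      simp [X_def]; rfl
    rw [← hf, heq', IsUnit.mul_iff, IsUnit.mul_iff]
    refine ⟨⟨isUnit_of_invertible _, ?_⟩, ?_⟩
    · nth_rw 1 [Y_def, heq, ← (f Q).fromBlocks_toBlocks, con2.2]
      simpa [hf, fromBlocks_multiply, fromBlocks_add]
    · exact f_unit <| isUnit_nonsing_inv_iff.2 hU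

variable {K : Type*} [Field K]

/-- Lower unipotent block matrix. -/
def weilL (B : Matrix l l K) : Matrix (l ⊕ l) (l ⊕ l) K := fromBlocks 1 0 B 1
/-- Upper unipotent block matrix. -/
def weilN (B : Matrix l l K) : Matrix (l ⊕ l) (l ⊕ l) K := fromBlocks 1 B 0 1
/-- Levi block matrix. -/
noncomputable def weilM (A : Matrix l l K) : Matrix (l ⊕ l) (l ⊕ l) K := fromBlocks A 0 0 (A⁻¹)ᵀ
/-- partial Weyl element attached to a finset. -/
def weilW (K : Type*) [Field K] (T : Finset l) : Matrix (l ⊕ l) (l ⊕ l) K :=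
  fromBlocks (diagonal fun i => if i ∈ T then 0 else 1) (diagonal fun i => if i ∈ T then -1 else 0)
    (diagonal fun i => if i ∈ T then 1 else 0) (diagonal fun i => if i ∈ T then 0 else 1)

lemma weilL_mem {B : Matrix l l K} (hB : B.IsSymm) : weilL B ∈ symplecticGroup l K := by
  rw [weilL, SymplecticGroup.fromBlocks_mem_iff]
  simp [hB.eq]

lemma weilW_mem (T : Finset l) : weilW K T ∈ symplecticGroup l K := by
  rw [weilW, SymplecticGroup.fromBlocks_mem_iff]
  refine ⟨?_, ?_, ?_⟩
  · simp [diagonal_mul_diagonal]; intro i; split_ifs <;> simp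
  · simp [diagonal_mul_diagonal]; intro i; split_ifs <;> simp
  · simp only [diagonal_transpose, diagonal_mul_diagonal, diagonal_sub]
    rw [← diagonal_one]
    congr 1; ext i; split_ifs <;> simp

lemma weilW_insert (T : Finset l) (t : l) (ht : t ∉ T) :
    weilW K (insert t T) = weilW K {t} * weilW K T := by
  simp only [weilW, fromBlocks_multiply, diagonal_mul_diagonal, diagonal_add]
  congr 2 <;> (ext i; by_cases h : i = t <;> by_cases h' : i ∈ T <;> simp_all)

lemma weilL_add (A B : Matrix l l K) : weilL (A + B) = weilL A * weilL B := by
  simp [weilL, fromBlocks_multiply]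

lemma weilW_univ : weilW K (Finset.univ : Finset l) = J l K := by
  simp only [weilW, J, Finset.mem_univ, if_true]
  congr 1
  · ext i j; simp [diagonal_apply]
  · ext i j; simp [diagonal_apply, one_apply]; split_ifs <;> simp
  · ext i j; simp [diagonal_apply]

variable {r : ℕ} [Fact (Nat.Prime r)]

lemma weil_L_in (hr : Odd r) (S : Submonoid (Matrix (l ⊕ l) (l ⊕ l) (ZMod r)))
    (h : ∀ i j, weilL (single i j (1 : ZMod r) + single j i 1) ∈ S)
    (B : Matrix l l (ZMod r)) (hB : B.IsSymm) : weilL B ∈ S := by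
  have h2 : (2 : ZMod r) ≠ 0 := by
    have : ((2:ℕ) : ZMod r) ≠ 0 := by
      rw [Ne, ZMod.natCast_eq_zero_iff]
      intro hd
      have := (Nat.prime_dvd_prime_iff_eq (Fact.out : r.Prime) Nat.prime_two).1 hd
      subst this; exact absurd hr (by decide)
    exact_mod_cast this
  let T : AddSubmonoid (Matrix l l (ZMod r)) :=
    { carrier := {B | weilL B ∈ S}
      add_mem' := fun {a b} ha hb => by
        simp only [Set.mem_ofPred_eq] at *
        rw [weilL_add]; exact S.mul_mem ha hb
      zero_mem' := by simp [weilL, S.one_mem] }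
  have key : ∀ i j (c : ZMod r), c • (single i j (1 : ZMod r) + single j i 1) ∈ T := by
    intro i j c
    have := T.nsmul_mem (show (single i j (1 : ZMod r) + single j i 1) ∈ T from h i j) c.val
    rwa [← Nat.cast_smul_eq_nsmul (ZMod r), ZMod.natCast_zmod_val] at this
  have e : B = ∑ i, ∑ j, (B i j / 2) • (single i j (1 : ZMod r) + single j i 1) := by
    have e1 := matrix_eq_sum_single B
    have e2 : B = ∑ i, ∑ j, single j i (B i j) := by
      conv_lhs => rw [e1, Finset.sum_comm]
      refine Finset.sum_congr rfl fun i _ => Finset.sum_congr rfl fun j _ => ?_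
      rw [hB.apply]
    have : (2 : ZMod r) • B = (2 : ZMod r) • ∑ i, ∑ j, (B i j / 2) • (single i j (1 : ZMod r) + single j i 1) := by
      rw [two_smul]
      conv_lhs => 
        congr
        · rw [e1]
        · rw [e2]
      rw [← Finset.sum_add_distrib, Finset.smul_sum]
      refine Finset.sum_congr rfl fun i _ => ?_
      rw [← Finset.sum_add_distrib, Finset.smul_sum]
      refine Finset.sum_congr rfl fun j _ => ?_
      rw [smul_smul, mul_div_cancel₀ _ h2, smul_add]
      simp [smul_single]
    exact smul_right_injective _ h2 this
  change B ∈ T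
  rw [e]
  exact T.sum_mem fun i _ => T.sum_mem fun j _ => key i j _

lemma weil_sp_le (hr : Odd r) (S : Submonoid (Matrix (l ⊕ l) (l ⊕ l) (ZMod r)))
    (h : ∀ i j, weilL (single i j (1 : ZMod r) + single j i 1) ∈ S)
    (hw : ∀ t, weilW (ZMod r) {t} ∈ S) : symplecticGroup l (ZMod r) ≤ S := by
  have hL := weil_L_in hr S h
  have hW : ∀ T, weilW (ZMod r) (T : Finset l) ∈ S := by
    intro T
    induction T using Finset.induction_on with
    | empty => 
      have : weilW (ZMod r) (∅ : Finset l) = 1 := by simp [weilW]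
      rw [this]; exact S.one_mem
    | insert t T ht ih => rw [weilW_insert T t ht]; exact S.mul_mem (hw t) ih
  have hJ : J l (ZMod r) ∈ S := weilW_univ (l := l) (K := ZMod r) ▸ hW _
  have hN : ∀ B : Matrix l l (ZMod r), B.IsSymm → weilN B ∈ S := by
    intro B hB
    have : weilN B = J l (ZMod r) * weilL (-B) * (J l (ZMod r) * J l (ZMod r) * J l (ZMod r)) := by
      rw [J_squared]; simp [weilN, weilL, J, fromBlocks_multiply, fromBlocks_neg]
    rw [this]
    exact S.mul_mem (S.mul_mem hJ (hL _ hB.neg)) (S.mul_mem (S.mul_mem hJ hJ) hJ)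
  have hMs : ∀ A : Matrix l l (ZMod r), A.IsSymm → IsUnit A.det → weilM A ∈ S := by
    intro A hA hd
    have hAi : (A⁻¹).IsSymm := by rw [IsSymm, transpose_nonsing_inv, hA.eq]
    have : weilM A = weilN A * weilL (-A⁻¹) * weilN A * J l (ZMod r) := by
      simp [weilN, weilL, weilM, J, fromBlocks_multiply, hAi.eq, mul_nonsing_inv _ hd, nonsing_inv_mul _ hd]
    rw [this]
    exact S.mul_mem (S.mul_mem (S.mul_mem (hN _ hA) (hL _ hAi.neg)) (hN _ hA)) hJ
  have hMmul : ∀ A B : Matrix l l (ZMod r), weilM (A * B) = weilM A * weilM B := by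
    intro A B
    simp [weilM, fromBlocks_multiply, Matrix.mul_inv_rev]
  have hM : ∀ A : Matrix l l (ZMod r), IsUnit A.det → weilM A ∈ S := by
    intro A hA
    refine diagonal_transvection_induction_of_det_ne_zero (fun A => weilM A ∈ S) A hA.ne_zero ?_ ?_ ?_
    · intro D hD
      exact hMs _ (isSymm_diagonal D) (isUnit_iff_ne_zero.2 hD)
    · rintro ⟨i, j, hij, c⟩
      simp only [TransvectionStruct.toMatrix_mk]
      let P : Matrix l l (ZMod r) := (Equiv.swap i j).toPEquiv.toMatrix
      have hPs : P.IsSymm := by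
        simp only [P, IsSymm, ← PEquiv.toMatrix_symm]
        rw [← Equiv.toPEquiv_symm, Equiv.symm_swap]
      have hPP : P * P = 1 := by
        simp only [P, ← PEquiv.toMatrix_trans]
        rw [← Equiv.toPEquiv_trans]
        have : (Equiv.swap i j).trans (Equiv.swap i j) = Equiv.refl _ := by ext x; simp
        rw [this]; simp
      have hPd : IsUnit P.det := by
        rw [← isUnit_iff_isUnit_det]; exact IsUnit.of_mul_eq_one _ hPP
      have hTP : transvection i j c * P = P + single i i c := by
        rw [transvection, add_mul, one_mul]
        congr 1
        ext a b
        by_cases ha : i = a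
        · subst ha
          rw [single_mul_apply_same]
          simp [P, PEquiv.toMatrix_apply, single_apply, Equiv.toPEquiv_apply, eq_comm]
        · rw [single_mul_apply_of_ne _ _ _ _ _ (Ne.symm ha)]; simp [single_apply, ha]
      have h1 : transvection i j c = (P + single i i c) * P := by
        rw [← hTP, mul_assoc, hPP, mul_one]
      have hs : (P + single i i c).IsSymm := by
        refine hPs.add ?_
        simp [IsSymm]
      rw [h1, hMmul]
      refine S.mul_mem (hMs _ hs ?_) (hMs _ hPs hPd)
      rw [← hTP, det_mul, det_transvection_of_ne _ _ hij, one_mul]; exact hPd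
    · intro A B _ _ hA hB
      rw [hMmul]; exact S.mul_mem hA hB
  intro M hMem
  obtain ⟨A, B, C, D, rfl⟩ : ∃ A B C D, M = fromBlocks A B C D := ⟨_, _, _, _, (fromBlocks_toBlocks M).symm⟩
  have hF : IsUnit (fromBlocks A B C D) := (isUnit_iff_isUnit_det _).2 (SymplecticGroup.symplectic_det hMem)
  obtain ⟨X, hX, hu⟩ := weil_exists_symm (A := A) (C := C) (by
    intro x hx1 hx2
    have hv0 : fromBlocks A B C D *ᵥ (Sum.elim x 0) = fromBlocks A B C D *ᵥ (Sum.elim 0 0) := by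
      rw [smul_eq_mulVec] at hx1 hx2
      simp [fromBlocks_mulVec, hx1, hx2]
    exact (Sum.elim_eq_iff.1 (mulVec_injective_iff_isUnit.2 hF hv0)).1) (SymplecticGroup.fromBlocks_mem_iff.1 hMem).1
  have hN0 : weilN X * fromBlocks A B C D = fromBlocks (A + X * C) (B + X * D) C D := by
    simp [weilN, fromBlocks_multiply]
  have hNmem : weilN X ∈ symplecticGroup l (ZMod r) := by
    rw [weilN, SymplecticGroup.fromBlocks_mem_iff]; simp [hX.eq]
  have hM' := mul_mem hNmem hMem
  have hN1 : fromBlocks A B C D = weilN (-X) * (weilN X * fromBlocks A B C D) := by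
    rw [← mul_assoc]
    have : weilN (-X) * weilN X = 1 := by simp [weilN, fromBlocks_multiply]
    rw [this, one_mul]
  rw [hN1]
  refine S.mul_mem (hN _ hX.neg) ?_
  rw [hN0] at hM' ⊢
  generalize A + X * C = A' at *
  generalize B + X * D = B' at *
  have hAd := (isUnit_iff_isUnit_det _).1 hu
  obtain ⟨q1, q2, q3⟩ := SymplecticGroup.fromBlocks_mem_iff.1 hM'
  have hT := SymplecticGroup.transpose_mem hM'
  rw [fromBlocks_transpose] at hT
  obtain ⟨p1, -, -⟩ := SymplecticGroup.fromBlocks_mem_iff.1 hT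
  simp only [transpose_transpose] at p1
  have hAdt : IsUnit A'ᵀ.det := by rwa [det_transpose]
  have e1 : C * A'⁻¹ = A'ᵀ⁻¹ * Cᵀ := by
    have : A'ᵀ⁻¹ * (A'ᵀ * C) * A'⁻¹ = A'ᵀ⁻¹ * (Cᵀ * A') * A'⁻¹ := by rw [q1]
    rw [nonsing_inv_mul_cancel_left _ _ hAdt, mul_assoc, mul_assoc, mul_nonsing_inv _ hAd, mul_one] at this
    exact this
  have e2 : A'⁻¹ * B' = B'ᵀ * A'ᵀ⁻¹ := by
    have : A'⁻¹ * (A' * B'ᵀ) * A'ᵀ⁻¹ = A'⁻¹ * (B' * A'ᵀ) * A'ᵀ⁻¹ := by rw [p1]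
    rw [nonsing_inv_mul_cancel_left _ _ hAd, mul_assoc, mul_assoc, mul_nonsing_inv _ hAdt, mul_one] at this
    exact this.symm
  have s1 : (C * A'⁻¹).IsSymm := by
    rw [IsSymm, transpose_mul, transpose_nonsing_inv, e1]
  have s2 : (A'⁻¹ * B').IsSymm := by
    rw [IsSymm, transpose_mul, transpose_nonsing_inv, e2]
  have hD : D = C * A'⁻¹ * B' + (A'⁻¹)ᵀ := by
    have : A'ᵀ * D = 1 + Cᵀ * B' := by rw [← q3]; abel
    have h3 : A'ᵀ⁻¹ * (A'ᵀ * D) = A'ᵀ⁻¹ * (1 + Cᵀ * B') := by rw [this]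
    rw [nonsing_inv_mul_cancel_left _ _ hAdt, mul_add, mul_one, ← mul_assoc, ← e1] at h3
    rw [h3, transpose_nonsing_inv, add_comm]
  have fin : fromBlocks A' B' C D = weilL (C * A'⁻¹) * weilM A' * weilN (A'⁻¹ * B') := by
    simp only [weilL, weilM, weilN, fromBlocks_multiply]
    simp [hD, mul_assoc, mul_nonsing_inv_cancel_left _ _ hAd, nonsing_inv_mul _ hAd]
  rw [fin]
  exact S.mul_mem (S.mul_mem (hL _ s1) (hM _ hAd)) (hN _ s2)

end WeilSymplecticGeneration

section WeilWeyl
open Matrix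

variable {r : ℕ} [Fact (Nat.Prime r)] {𝔽 : Type*} [Field 𝔽]
variable {l : Type*} [Fintype l] [DecidableEq l]

/-- Weyl operators. -/
def weilX (e : AddChar (ZMod r) 𝔽) (h : ZMod r) (v : l ⊕ l → ZMod r) :
    Matrix (l → ZMod r) (l → ZMod r) 𝔽 :=
  of fun η ξ => if η = ξ + v ∘ Sum.inl then
    e ((v ∘ Sum.inr) ⬝ᵥ ξ + h * ((v ∘ Sum.inl) ⬝ᵥ (v ∘ Sum.inr))) else 0

lemma weil_mul_X (e : AddChar (ZMod r) 𝔽) (h : ZMod r) (v : l ⊕ l → ZMod r)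
    (g : Matrix (l → ZMod r) (l → ZMod r) 𝔽) (η ξ : l → ZMod r) :
    (g * weilX e h v) η ξ = g η (ξ + v ∘ Sum.inl) *
      e ((v ∘ Sum.inr) ⬝ᵥ ξ + h * ((v ∘ Sum.inl) ⬝ᵥ (v ∘ Sum.inr))) := by
  simp [mul_apply, weilX]

lemma weil_X_mul (e : AddChar (ZMod r) 𝔽) (h : ZMod r) (v : l ⊕ l → ZMod r)
    (g : Matrix (l → ZMod r) (l → ZMod r) 𝔽) (η ξ : l → ZMod r) :
    (weilX e h v * g) η ξ =
      e ((v ∘ Sum.inr) ⬝ᵥ (η - v ∘ Sum.inl) + h * ((v ∘ Sum.inl) ⬝ᵥ (v ∘ Sum.inr))) *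
       g (η - v ∘ Sum.inl) ξ := by
  simp only [mul_apply, weilX, of_apply]
  rw [Finset.sum_eq_single (η - v ∘ Sum.inl)]
  · simp
  · intro b _ hb
    rw [if_neg, zero_mul]
    rintro rfl; apply hb; simp
  · simp

lemma weilX_inj (e : AddChar (ZMod r) 𝔽) (he : ∀ x, e x = 1 → x = 0) (h : ZMod r)
    {v w : l ⊕ l → ZMod r} (hvw : weilX e h v = weilX e h w) : v = w := by
  have hne : ∀ x, e x ≠ 0 := fun x hx => by
    have := AddChar.map_add_eq_mul e x (-x)
    rw [hx] at this; simp at this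
  have ha : v ∘ Sum.inl = w ∘ Sum.inl := by
    have := congrFun (congrFun hvw (v ∘ Sum.inl)) 0
    simp only [weilX, of_apply, zero_add, if_true] at this
    by_contra hc
    rw [if_neg hc] at this
    exact hne _ this
  have h1 : ∀ ξ, e ((v ∘ Sum.inr) ⬝ᵥ ξ + h * ((v ∘ Sum.inl) ⬝ᵥ (v ∘ Sum.inr))) =
      e ((w ∘ Sum.inr) ⬝ᵥ ξ + h * ((w ∘ Sum.inl) ⬝ᵥ (w ∘ Sum.inr))) := by
    intro ξ
    have := congrFun (congrFun hvw (ξ + v ∘ Sum.inl)) ξ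
    simpa only [weilX, of_apply, ← ha, if_true] using this
  have hb : v ∘ Sum.inr = w ∘ Sum.inr := by
    ext i
    have h0 := h1 0
    have h2 := h1 (Pi.single i 1)
    simp only [dotProduct_zero, zero_add] at h0
    rw [AddChar.map_add_eq_mul, AddChar.map_add_eq_mul, h0] at h2
    have h3 := mul_right_cancel₀ (hne _) h2
    simp only [dotProduct_single, mul_one] at h3
    have : e ((v ∘ Sum.inr) i - (w ∘ Sum.inr) i) = 1 := by
      have h4 := AddChar.map_add_eq_mul e ((v ∘ Sum.inr) i - (w ∘ Sum.inr) i) ((w ∘ Sum.inr) i)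
      rw [sub_add_cancel, h3] at h4
      exact (mul_eq_right₀ (hne _)).1 h4.symm
    exact sub_eq_zero.1 (he _ this)
  ext (i | i)
  · exact congrFun ha i
  · exact congrFun hb i

/-- `g` implements `M`. -/
def weilRel (e : AddChar (ZMod r) 𝔽) (h : ZMod r) (g : Matrix (l → ZMod r) (l → ZMod r) 𝔽)
    (M : Matrix (l ⊕ l) (l ⊕ l) (ZMod r)) : Prop :=
  ∀ v, g * weilX e h v = weilX e h (M *ᵥ v) * g

lemma weilRel_one (e : AddChar (ZMod r) 𝔽) (h : ZMod r) :
    weilRel (l := l) e h 1 1 := by intro v; simp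

lemma weilRel_mul {e : AddChar (ZMod r) 𝔽} {h : ZMod r} {g g' : Matrix (l → ZMod r) (l → ZMod r) 𝔽}
    {M M' : Matrix (l ⊕ l) (l ⊕ l) (ZMod r)} (h1 : weilRel e h g M) (h2 : weilRel e h g' M') :
    weilRel e h (g * g') (M * M') := by
  intro v
  rw [mul_assoc, h2, ← mul_assoc, h1, mul_assoc, mulVec_mulVec]

lemma weilRel_inv {e : AddChar (ZMod r) 𝔽} {h : ZMod r} {g g' : Matrix (l → ZMod r) (l → ZMod r) 𝔽}
    {M M' : Matrix (l ⊕ l) (l ⊕ l) (ZMod r)} (h1 : weilRel e h g M) (hg : g * g' = 1)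
    (hg' : g' * g = 1) (hM : M * M' = 1) :
    weilRel e h g' M' := by
  intro v
  have := h1 (M' *ᵥ v)
  rw [mulVec_mulVec, hM, one_mulVec] at this
  calc g' * weilX e h v = g' * (weilX e h v * g) * g' := by
        rw [mul_assoc, mul_assoc, hg, mul_one]
    _ = _ := by rw [← this, ← mul_assoc, hg', one_mul]

lemma weilRel_unique {e : AddChar (ZMod r) 𝔽} (he : ∀ x, e x = 1 → x = 0) {h : ZMod r}
    {g g' : Matrix (l → ZMod r) (l → ZMod r) 𝔽}
    {M M' : Matrix (l ⊕ l) (l ⊕ l) (ZMod r)} (h1 : weilRel e h g M) (h2 : weilRel e h g M')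
    (hg : g * g' = 1) : M = M' := by
  have : ∀ v, M *ᵥ v = M' *ᵥ v := by
    intro v
    apply weilX_inj e he h
    have := (h1 v).symm.trans (h2 v)
    calc weilX e h (M *ᵥ v) = weilX e h (M *ᵥ v) * g * g' := by rw [mul_assoc, hg, mul_one]
      _ = _ := by rw [this, mul_assoc, hg, mul_one]
  exact Matrix.mulVec_injective (funext this)

lemma weilRel_scalar {e : AddChar (ZMod r) 𝔽} (he : ∀ x, e x = 1 → x = 0) {h : ZMod r}
    {g : Matrix (l → ZMod r) (l → ZMod r) 𝔽} (h1 : weilRel e h g 1) :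
    ∃ c : 𝔽, g = c • 1 := by
  have hne : ∀ x, e x ≠ 0 := fun x hx => by
    have := AddChar.map_add_eq_mul e x (-x)
    rw [hx] at this; simp at this
  refine ⟨g 0 0, ?_⟩
  ext η ξ
  by_cases hηξ : η = ξ
  · subst hηξ
    have := congrFun (congrFun (h1 (Sum.elim η 0)) η) 0
    rw [weil_mul_X, weil_X_mul] at this
    simp at this
    simp [this]
  · obtain ⟨i, hi⟩ := Function.ne_iff.1 hηξ
    have := congrFun (congrFun (h1 (Sum.elim 0 (Pi.single i 1))) η) ξ
    rw [one_mulVec, weil_mul_X, weil_X_mul] at this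
    simp only [Sum.elim_comp_inl, Sum.elim_comp_inr, add_zero, sub_zero, zero_dotProduct, mul_zero,
      single_dotProduct, one_mul] at this
    rw [mul_comm, mul_eq_mul_right_iff] at this
    simp only [Matrix.smul_apply, one_apply_ne hηξ, smul_zero]
    rcases this with h3 | h3
    · exfalso
      have : e (ξ i - η i) = 1 := by
        have h4 := AddChar.map_add_eq_mul e (ξ i - η i) (η i)
        rw [sub_add_cancel, h3] at h4
        exact (mul_eq_right₀ (hne _)).1 h4.symm
      exact hi (sub_eq_zero.1 (he _ this)).symm
    · exact h3

lemma weilRel_diag {e : AddChar (ZMod r) 𝔽} {h : ZMod r} (h2 : 2 * h = 1)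
    (B : Matrix l l (ZMod r)) (hB : B.IsSymm) :
    weilRel e h (diagonal fun ξ => e (h * (ξ ⬝ᵥ B *ᵥ ξ))) (weilL B) := by
  intro v
  ext η ξ
  rw [weil_mul_X, weil_X_mul]
  obtain ⟨a, b, rfl⟩ : ∃ a b, v = Sum.elim a b := ⟨_, _, (Sum.elim_comp_inl_inr v).symm⟩
  simp only [weilL, fromBlocks_mulVec, Sum.elim_comp_inl, Sum.elim_comp_inr, one_mulVec,
    zero_mulVec, add_zero]
  by_cases hc : η = ξ + a
  · subst hc
    simp only [add_sub_cancel_right, diagonal_apply_eq, ← AddChar.map_add_eq_mul]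
    congr 1
    simp only [mulVec_add, add_dotProduct, dotProduct_add]
    have s1 : ξ ⬝ᵥ B *ᵥ a = B *ᵥ a ⬝ᵥ ξ := dotProduct_comm _ _
    have s2 : a ⬝ᵥ B *ᵥ ξ = B *ᵥ a ⬝ᵥ ξ := by
      rw [dotProduct_mulVec, ← mulVec_transpose, hB.eq]
    rw [s1, s2]
    linear_combination (B *ᵥ a ⬝ᵥ ξ) * h2
  · rw [diagonal_apply_ne _ hc, diagonal_apply_ne _ (fun h => hc (by rw [← h]; simp))]
    simp

lemma weilRel_C {e : AddChar (ZMod r) 𝔽} {h : ZMod r} (h2 : 2 * h = 1) (c : 𝔽) (t : l) :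
    weilRel e h (c • of fun η ξ : l → ZMod r =>
          if ∀ i, i ≠ t → η i = ξ i then e (η t * ξ t) else 0) (weilW (ZMod r) {t}) := by
  intro v
  ext η ξ
  rw [weil_mul_X, weil_X_mul]
  obtain ⟨a, b, rfl⟩ : ∃ a b, v = Sum.elim a b := ⟨_, _, (Sum.elim_comp_inl_inr v).symm⟩
  simp only [weilW, fromBlocks_mulVec, Sum.elim_comp_inl, Sum.elim_comp_inr, Matrix.smul_apply, of_apply]
  generalize ha' : (diagonal fun i => if i ∈ ({t} : Finset l) then (0 : ZMod r) else 1) *ᵥ a +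
    (diagonal fun i => if i ∈ ({t} : Finset l) then (-1 : ZMod r) else 0) *ᵥ b = a'
  generalize hb' : (diagonal fun i => if i ∈ ({t} : Finset l) then (1 : ZMod r) else 0) *ᵥ a +
    (diagonal fun i => if i ∈ ({t} : Finset l) then (0 : ZMod r) else 1) *ᵥ b = b'
  have hat : a' t = - b t := by rw [← ha']; simp [mulVec_diagonal]
  have hbt : b' t = a t := by rw [← hb']; simp [mulVec_diagonal]
  have hai : ∀ i, i ≠ t → a' i = a i := by intro i hi; rw [← ha']; simp [mulVec_diagonal, hi]
  have hbi : ∀ i, i ≠ t → b' i = b i := by intro i hi; rw [← hb']; simp [mulVec_diagonal, hi]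
  clear ha' hb'
  by_cases hc : ∀ i, i ≠ t → η i = (ξ + a) i
  · rw [if_pos hc, if_pos (fun i hi => by simp [hc i hi, hai i hi])]
    simp only [smul_eq_mul]
    rw [mul_assoc, mul_left_comm (e _), ← AddChar.map_add_eq_mul, ← AddChar.map_add_eq_mul]
    congr 2
    have sp : ∀ x y : l → ZMod r, x ⬝ᵥ y = x t * y t + ∑ i ∈ Finset.univ.erase t, x i * y i := by
      intro x y
      rw [dotProduct, Finset.add_sum_erase _ (fun i => x i * y i) (Finset.mem_univ t)]
    rw [sp b ξ, sp a b, sp b' (η - a'), sp a' b']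
    have k1 : ∑ i ∈ Finset.univ.erase t, b' i * (η - a') i = ∑ i ∈ Finset.univ.erase t, b i * ξ i := by
      refine Finset.sum_congr rfl fun i hi => ?_
      have hi := Finset.ne_of_mem_erase hi
      simp [hbi i hi, hai i hi, hc i hi]
    have k2 : ∑ i ∈ Finset.univ.erase t, a' i * b' i = ∑ i ∈ Finset.univ.erase t, a i * b i := by
      refine Finset.sum_congr rfl fun i hi => ?_
      have hi := Finset.ne_of_mem_erase hi
      simp [hbi i hi, hai i hi]
    rw [k1, k2]
    simp only [Pi.add_apply, Pi.sub_apply, hat, hbt]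
    linear_combination (a t * b t) * h2
  · rw [if_neg hc, if_neg]
    · simp
    · intro h; apply hc; intro i hi
      have := h i hi
      simp only [Pi.sub_apply, hai i hi] at this
      simp [← this]

end WeilWeyl

section WeilChi
open Matrix

variable {𝔽 : Type*} [Field 𝔽]
variable {X : Type*} [AddCommGroup X] [Fintype X] [DecidableEq X]

/-- Odd functions (vanishing at zero). -/
def weilO (𝔽 : Type*) [Field 𝔽] (X : Type*) [AddCommGroup X] : Submodule 𝔽 (X → 𝔽) where
  carrier := {f | (∀ x, f (-x) = - f x) ∧ f 0 = 0}
  add_mem' := by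
    rintro a b ⟨h1, h2⟩ ⟨h3, h4⟩
    exact ⟨fun x => by simp [h1, h3, add_comm], by simp [h2, h4]⟩
  zero_mem' := ⟨by simp, by simp⟩
  smul_mem' := by
    rintro c a ⟨h1, h2⟩
    exact ⟨fun x => by simp [h1], by simp [h2]⟩

/-- Matrices commuting with negation. -/
def weilEven (A : Matrix X X 𝔽) : Prop := ∀ η ξ, A (-η) (-ξ) = A η ξ

/-- No two-torsion. -/
def weilOdd (X : Type*) [AddCommGroup X] : Prop := ∀ x : X, -x = x → x = 0

lemma weilEven_mapsTo (hX : weilOdd X) {A : Matrix X X 𝔽} (hA : weilEven A) :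
    ∀ f ∈ weilO 𝔽 X, A.mulVecLin f ∈ weilO 𝔽 X := by
  rintro f ⟨h1, h2⟩
  refine ⟨fun x => ?_, ?_⟩
  · simp only [mulVecLin_apply, mulVec, dotProduct]
    rw [← Finset.sum_neg_distrib, ← Equiv.sum_comp (Equiv.neg X)]
    refine Finset.sum_congr rfl fun y _ => ?_
    simp [hA x y, h1]
  · simp only [mulVecLin_apply, mulVec, dotProduct]
    refine Finset.sum_involution (fun x _ => -x) ?_ ?_ ?_ ?_
    · intro x _
      have := hA 0 x
      rw [neg_zero] at this
      simp [this, h1]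
    · intro x _ hx hc
      apply hx
      rw [hX x hc, h2, mul_zero]
    · simp
    · simp

/-- The action on odd functions. -/
noncomputable def weilRest (hX : weilOdd X) (A : Matrix X X 𝔽) (hA : weilEven A) :
    weilO 𝔽 X →ₗ[𝔽] weilO 𝔽 X := A.mulVecLin.restrict (weilEven_mapsTo hX hA)

/-- The key determinant identity. -/
def weilChi (hX : weilOdd X) (A : Matrix X X 𝔽) : Prop :=
  ∃ hA : weilEven A, A.det = (LinearMap.det (weilRest hX A hA)) ^ 2

lemma weilEven_mul {A B : Matrix X X 𝔽} (hA : weilEven A) (hB : weilEven B) : weilEven (A * B) := by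
  intro η ξ
  simp only [mul_apply]
  rw [← Equiv.sum_comp (Equiv.neg X)]
  refine Finset.sum_congr rfl fun y _ => ?_
  simp [hA η y, hB y ξ]

lemma weilRest_mul (hX : weilOdd X) {A B : Matrix X X 𝔽} (hA : weilEven A) (hB : weilEven B) :
    weilRest hX (A * B) (weilEven_mul hA hB) = weilRest hX A hA ∘ₗ weilRest hX B hB := by
  ext f x
  simp [weilRest, mulVec_mulVec]

lemma weilChi_mul (hX : weilOdd X) {A B : Matrix X X 𝔽} (hA : weilChi hX A) (hB : weilChi hX B) :
    weilChi hX (A * B) := by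
  obtain ⟨a, ha⟩ := hA
  obtain ⟨b, hb⟩ := hB
  refine ⟨weilEven_mul a b, ?_⟩
  rw [weilRest_mul, LinearMap.det_comp, det_mul, ha, hb, mul_pow]

lemma weilEven_one : weilEven (1 : Matrix X X 𝔽) := by
  intro η ξ; simp [one_apply]

lemma weilEven_smul (c : 𝔽) {A : Matrix X X 𝔽} (hA : weilEven A) : weilEven (c • A) := by
  intro η ξ; simp [hA η ξ]

lemma weilRest_one (hX : weilOdd X) (h : weilEven (1 : Matrix X X 𝔽)) :
    weilRest hX 1 h = LinearMap.id := by
  ext f x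
  simp [weilRest]

lemma weilRest_smul_one (hX : weilOdd X) (c : 𝔽) (h : weilEven (c • 1 : Matrix X X 𝔽)) :
    weilRest hX (c • 1) h = c • LinearMap.id := by
  ext f x
  simp [weilRest, smul_mulVec]

lemma weilChi_one (hX : weilOdd X) : weilChi hX (1 : Matrix X X 𝔽) :=
  ⟨weilEven_one, by simp [weilRest_one]⟩

lemma weilEven_inv {A B : Matrix X X 𝔽} (hA : weilEven A) (hAB : A * B = 1) : weilEven B := by
  have e : A.submatrix (Equiv.neg X) (Equiv.neg X) = A := by ext; simp [hA _ _]
  have : B.submatrix (Equiv.neg X) (Equiv.neg X) = B := by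
    have h1 : A * B.submatrix (Equiv.neg X) (Equiv.neg X) = 1 := by
      conv_lhs => rw [← e]
      rw [submatrix_mul_equiv, hAB, submatrix_one_equiv]
    have h2 : B * A = 1 := mul_eq_one_comm.1 hAB
    exact (left_inv_eq_right_inv h2 h1).symm
  intro η ξ
  exact congrFun (congrFun this η) ξ

lemma weilChi_inv (hX : weilOdd X) {A B : Matrix X X 𝔽} (hA : weilChi hX A) (hAB : A * B = 1) :
    weilChi hX B := by
  obtain ⟨a, ha⟩ := hA
  have b := weilEven_inv a hAB
  refine ⟨b, ?_⟩
  have h1 : A.det * B.det = 1 := by rw [← det_mul, hAB, det_one]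
  have h2 : LinearMap.det (weilRest hX A a) * LinearMap.det (weilRest hX B b) = 1 := by
    rw [← LinearMap.det_comp, ← weilRest_mul]
    have : ∀ h, weilRest hX (A * B) h = LinearMap.id := by
      rw [hAB]; exact weilRest_one hX
    rw [this, LinearMap.det_id]
  have h3 : A.det ≠ 0 := left_ne_zero_of_mul_eq_one h1
  apply mul_left_cancel₀ h3
  rw [h1, ha, ← mul_pow, h2, one_pow]

/-- half systems -/
def weilHalf (H : Finset X) : Prop := (∀ x ∈ H, -x ∉ H) ∧ ∀ x, x ≠ 0 → x ∈ H ∨ -x ∈ H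

lemma weil_exists_half (hX : weilOdd X) : ∃ H : Finset X, weilHalf H := by
  let e := Fintype.equivFin X
  refine ⟨Finset.univ.filter fun x => e x < e (-x), ?_, ?_⟩
  · intro x hx
    simp only [Finset.mem_filter, Finset.mem_univ, true_and, neg_neg, not_lt] at *
    exact hx.le
  · intro x hx
    simp only [Finset.mem_filter, Finset.mem_univ, true_and, neg_neg]
    apply lt_or_gt_of_ne
    intro h
    exact hx (hX x (e.injective h).symm)

lemma weilHalf_zero {H : Finset X} (hH : weilHalf H) : (0 : X) ∉ H := fun h => hH.1 0 h (by simpa)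

lemma weilHalf_prod {H : Finset X} (hH : weilHalf H) {M : Type*} [CommMonoid M] (F : X → M) :
    ∏ x, F x = F 0 * ((∏ x ∈ H, F x) * ∏ x ∈ H, F (-x)) := by
  have hu : (Finset.univ : Finset X) = insert 0 (H ∪ H.image (fun x => -x)) := by
    ext x
    simp only [Finset.mem_univ, Finset.mem_insert, Finset.mem_union, Finset.mem_image, true_iff]
    by_cases hx : x = 0
    · exact Or.inl hx
    · right
      rcases hH.2 x hx with h | h
      · exact Or.inl h
      · exact Or.inr ⟨-x, h, neg_neg x⟩
  have hd : Disjoint H (H.image (fun x => -x)) := by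
    rw [Finset.disjoint_left]
    intro x hx hx'
    obtain ⟨y, hy, rfl⟩ := Finset.mem_image.1 hx'
    exact hH.1 y hy hx
  rw [hu, Finset.prod_insert, Finset.prod_union hd, Finset.prod_image]
  · intro a _ b _ hab; exact neg_injective hab
  · simp [weilHalf_zero hH]

lemma weilHalf_card {H : Finset X} (hH : weilHalf H) : Fintype.card X = 2 * H.card + 1 := by
  have := weilHalf_prod hH (fun _ => Multiplicative.ofAdd (1 : ℕ))
  simp only [Finset.prod_const, ← ofAdd_nsmul, ← ofAdd_add] at this
  have := Multiplicative.ofAdd.injective this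
  simp at this
  omega

/-- odd extension of a function on a half system -/
def weilExt (H : Finset X) (p : H → 𝔽) (x : X) : 𝔽 :=
  if h : x ∈ H then p ⟨x, h⟩ else if h : -x ∈ H then - p ⟨-x, h⟩ else 0

lemma weilExt_mem {H : Finset X} (hH : weilHalf H) (p : H → 𝔽) : weilExt H p ∈ weilO 𝔽 X := by
  refine ⟨fun x => ?_, ?_⟩
  · by_cases h : x ∈ H
    · simp [weilExt, h, hH.1 x h]
    · by_cases h' : -x ∈ H <;> simp [weilExt, h, h']
  · simp [weilExt, weilHalf_zero hH]

lemma weilO_ext {H : Finset X} (hH : weilHalf H) {f g : X → 𝔽} (hf : f ∈ weilO 𝔽 X)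
    (hg : g ∈ weilO 𝔽 X) (h : ∀ x ∈ H, f x = g x) : f = g := by
  ext x
  by_cases hx : x = 0
  · rw [hx, hf.2, hg.2]
  · rcases hH.2 x hx with h' | h'
    · exact h x h'
    · have := h _ h'
      rw [hf.1, hg.1] at this
      exact neg_injective this

/-- odd functions are functions on a half system -/
def weilOEquiv {H : Finset X} (hH : weilHalf H) : weilO 𝔽 X ≃ₗ[𝔽] (H → 𝔽) where
  toFun f := fun x => f.1 x.1
  invFun p := ⟨weilExt H p, weilExt_mem hH p⟩
  map_add' := fun _ _ => rfl
  map_smul' := fun _ _ => rfl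
  left_inv := fun f => by
    apply Subtype.ext
    refine weilO_ext hH (weilExt_mem (𝔽 := 𝔽) hH (fun x : H => f.1 x.1)) f.2 fun x hx => ?_
    simp [weilExt, hx]
  right_inv := fun p => by
    ext ⟨x, hx⟩
    simp [weilExt, hx]

lemma weilO_finrank {H : Finset X} (hH : weilHalf H) : Module.finrank 𝔽 (weilO 𝔽 X) = H.card := by
  rw [(weilOEquiv (𝔽 := 𝔽) hH).finrank_eq]; simp

lemma weilO_finrank' (hX : weilOdd X) : Fintype.card X = 2 * Module.finrank 𝔽 (weilO 𝔽 X) + 1 := by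
  obtain ⟨H, hH⟩ := weil_exists_half hX
  rw [weilO_finrank hH, weilHalf_card hH]

lemma weilChi_scalar (hX : weilOdd X) (c : 𝔽) (h : weilChi hX (c • 1 : Matrix X X 𝔽)) (hc : c ≠ 0) :
    c = 1 := by
  obtain ⟨a, ha⟩ := h
  rw [weilRest_smul_one, LinearMap.det_smul, LinearMap.det_id, mul_one, det_smul, det_one, mul_one,
    weilO_finrank' (𝔽 := 𝔽) hX, pow_succ, ← pow_mul, mul_comm 2] at ha
  exact (mul_eq_left₀ (pow_ne_zero _ hc)).1 ha

lemma weilChi_diag (hX : weilOdd X) (d : X → 𝔽) (hd : ∀ x, d (-x) = d x) (h0 : d 0 = 1) :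
    weilChi hX (diagonal d) := by
  have hE : weilEven (diagonal d) := by
    intro η ξ
    by_cases h : η = ξ
    · subst h; simp [hd]
    · rw [diagonal_apply_ne _ h, diagonal_apply_ne _ (fun h' => h (neg_injective h'))]
  refine ⟨hE, ?_⟩
  obtain ⟨H, hH⟩ := weil_exists_half hX
  have key : (weilOEquiv (𝔽 := 𝔽) hH : weilO 𝔽 X →ₗ[𝔽] (H → 𝔽)) ∘ₗ weilRest hX _ hE ∘ₗ
      ((weilOEquiv (𝔽 := 𝔽) hH).symm : (H → 𝔽) →ₗ[𝔽] weilO 𝔽 X) =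
      toLin' (diagonal fun x : H => d x.1) := by
    apply LinearMap.ext
    intro p
    obtain ⟨f, rfl⟩ := (weilOEquiv hH).surjective p
    ext x
    simp only [LinearMap.comp_apply, LinearEquiv.coe_coe, LinearEquiv.symm_apply_apply]
    simp [weilRest, weilOEquiv, mulVec_diagonal]
  rw [← LinearMap.det_conj _ (weilOEquiv (𝔽 := 𝔽) hH), key, LinearMap.det_toLin', det_diagonal,
    det_diagonal, weilHalf_prod hH, h0, one_mul, sq]
  simp only [hd]
  rw [Finset.prod_coe_sort H d]

lemma weilChi_transport {X' : Type*} [AddCommGroup X'] [Fintype X'] [DecidableEq X']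
    (hX : weilOdd X) (hX' : weilOdd X') (e : X' ≃+ X) {A : Matrix X X 𝔽} (h : weilChi hX A) :
    weilChi hX' (A.submatrix e e) := by
  obtain ⟨a, ha⟩ := h
  have hE : weilEven (A.submatrix e e) := by
    intro η ξ; simp [a _ _]
  refine ⟨hE, ?_⟩
  let E : weilO 𝔽 X ≃ₗ[𝔽] weilO 𝔽 X' :=
    { toFun := fun f => ⟨fun x => f.1 (e x), fun x => by simp [f.2.1 _],
        by simpa using f.2.2⟩
      invFun := fun f => ⟨fun x => f.1 (e.symm x), fun x => by simp [f.2.1 _],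
        by simpa using f.2.2⟩
      map_add' := fun _ _ => rfl
      map_smul' := fun _ _ => rfl
      left_inv := fun f => by ext x; simp
      right_inv := fun f => by ext x; simp }
  have key : (E : weilO 𝔽 X →ₗ[𝔽] weilO 𝔽 X') ∘ₗ weilRest hX A a ∘ₗ
      (E.symm : weilO 𝔽 X' →ₗ[𝔽] weilO 𝔽 X) = weilRest hX' _ hE := by
    apply LinearMap.ext
    intro p
    obtain ⟨f, rfl⟩ := E.surjective p
    ext x
    simp only [LinearMap.comp_apply, LinearEquiv.coe_coe, LinearEquiv.symm_apply_apply]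
    simp only [E, weilRest, LinearEquiv.coe_mk, LinearMap.coe_mk, AddHom.coe_mk,
      LinearMap.coe_restrict_apply, mulVecLin_apply, mulVec, dotProduct, submatrix_apply]
    exact (Equiv.sum_comp e.toEquiv (fun y => A (e x) y * f.1 y)).symm
  rw [← key, LinearMap.det_conj, ← ha]
  exact det_submatrix_equiv_self e.toEquiv A

lemma weilChi_prod {Z Y : Type*} [AddCommGroup Z] [Fintype Z] [DecidableEq Z]
    [AddCommGroup Y] [Fintype Y] [DecidableEq Y] (hZ : weilOdd Z) (hY : weilOdd Y)
    (hZY : weilOdd (Z × Y)) {c : Matrix Z Z 𝔽} (hc : weilChi hZ c) :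
    weilChi hZY (of fun η ξ : Z × Y => if η.2 = ξ.2 then c η.1 ξ.1 else 0) := by
  obtain ⟨a, ha⟩ := hc
  have hE : weilEven (of fun η ξ : Z × Y => if η.2 = ξ.2 then c η.1 ξ.1 else 0) := by
    intro η ξ; simp [a _ _]
  refine ⟨hE, ?_⟩
  obtain ⟨H, hH⟩ := weil_exists_half hY
  let Φ : weilO 𝔽 (Z × Y) →ₗ[𝔽] (Z × H → 𝔽) × weilO 𝔽 Z :=
    { toFun := fun f => (fun p => f.1 (p.1, p.2.1), ⟨fun z => f.1 (z, 0), fun z => by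
          rw [← f.2.1]; simp, f.2.2⟩)
      map_add' := fun _ _ => rfl
      map_smul' := fun _ _ => rfl }
  have hinj : Function.Injective Φ := by
    rw [← LinearMap.ker_eq_bot, LinearMap.ker_eq_bot']
    intro f hf
    have h1 : ∀ z, ∀ y ∈ H, f.1 (z, y) = 0 := fun z y hy => congrFun (congrArg Prod.fst hf) (z, ⟨y, hy⟩)
    have h2 : ∀ z, f.1 (z, 0) = 0 := fun z =>
      congrFun (congrArg Subtype.val (congrArg Prod.snd hf)) z
    ext ⟨z, y⟩
    by_cases hy : y = 0
    · subst hy; exact h2 z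
    · rcases hH.2 y hy with h | h
      · exact h1 z y h
      · have := f.2.1 (z, y)
        rw [Prod.neg_mk, h1 _ _ h] at this
        simpa using this.symm
  have hfr : Module.finrank 𝔽 (weilO 𝔽 (Z × Y)) = Module.finrank 𝔽 ((Z × H → 𝔽) × weilO 𝔽 Z) := by
    have e1 := weilO_finrank' (𝔽 := 𝔽) hZY
    have e2 := weilO_finrank' (𝔽 := 𝔽) hZ
    have e3 := weilHalf_card hH
    rw [Module.finrank_prod, Module.finrank_fintype_fun_eq_card, Fintype.card_prod, Fintype.card_coe]
    rw [Fintype.card_prod, e3] at e1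
    have : Fintype.card Z * (2 * H.card + 1) = 2 * (Fintype.card Z * H.card) + Fintype.card Z := by ring
    omega
  obtain ⟨E, hEΦ⟩ : ∃ E : weilO 𝔽 (Z × Y) ≃ₗ[𝔽] ((Z × H → 𝔽) × weilO 𝔽 Z), ∀ f, E f = Φ f :=
    ⟨LinearEquiv.ofInjectiveOfFinrankEq Φ hinj hfr, fun f => rfl⟩
  have key : (E : weilO 𝔽 (Z × Y) →ₗ[𝔽] _) ∘ₗ weilRest hZY _ hE ∘ₗ
      (E.symm : _ →ₗ[𝔽] weilO 𝔽 (Z × Y)) =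
      (toLin' (kroneckerMap (· * ·) c (1 : Matrix H H 𝔽))).prodMap (weilRest hZ c a) := by
    apply LinearMap.ext
    intro p
    obtain ⟨f, rfl⟩ := E.surjective p
    simp only [LinearMap.comp_apply, LinearEquiv.coe_coe, LinearEquiv.symm_apply_apply]
    rw [hEΦ, hEΦ, LinearMap.prodMap_apply]
    refine Prod.ext ?_ ?_
    · ext ⟨z, y⟩
      simp [Φ, weilRest, mulVec, dotProduct, Fintype.sum_prod_type, one_apply]
    · ext z
      simp [Φ, weilRest, mulVec, dotProduct, Fintype.sum_prod_type]
  have hA : (of fun η ξ : Z × Y => if η.2 = ξ.2 then c η.1 ξ.1 else 0) =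
      kroneckerMap (· * ·) c (1 : Matrix Y Y 𝔽) := by
    ext ⟨η1, η2⟩ ⟨ξ1, ξ2⟩
    simp [one_apply]
  rw [← LinearMap.det_conj _ E, key, LinearMap.det_prodMap, LinearMap.det_toLin', hA]
  rw [det_kronecker, det_kronecker, det_one, det_one, one_pow, mul_one, mul_one,
    Fintype.card_coe, weilHalf_card hH, mul_pow, ← ha]
  ring

end WeilChi

section WeilFinal
open Matrix

variable {r : ℕ} [Fact (Nat.Prime r)] {𝔽 : Type*} [Field 𝔽]

lemma weil_two_ne (hr : Odd r) : (2 : ZMod r) ≠ 0 := by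
  have : ((2:ℕ) : ZMod r) ≠ 0 := by
    rw [Ne, ZMod.natCast_eq_zero_iff]
    intro hd
    have := (Nat.prime_dvd_prime_iff_eq (Fact.out : r.Prime) Nat.prime_two).1 hd
    subst this; exact absurd hr (by decide)
  exact_mod_cast this

lemma weilOdd_zmod (hr : Odd r) : weilOdd (ZMod r) := by
  intro x hx
  have : 2 * x = 0 := by linear_combination -hx
  exact (mul_eq_zero.1 this).resolve_left (weil_two_ne hr)

lemma weilOdd_fun (hr : Odd r) (l : Type*) : weilOdd (l → ZMod r) := by
  intro x hx
  ext i
  exact weilOdd_zmod hr _ (congrFun hx i)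

lemma weilChi_base (hr : Odd r) (e : AddChar (ZMod r) 𝔽) (he : e.IsPrimitive)
    (Cb : Matrix (ZMod r) (ZMod r) 𝔽) (hCb : ∀ i j : ZMod r, Cb i j = e (i * j))
    (lam : 𝔽) (hlam : lam = (-(r : 𝔽)) ^ ((r - 1) / 2) * Cb.det⁻¹) (hd : Cb.det ≠ 0) :
    weilChi (weilOdd_zmod hr) (lam • Cb) := by
  have hE : weilEven (lam • Cb) := weilEven_smul _ (fun η ξ => by simp [hCb])
  refine ⟨hE, ?_⟩
  have hsq : ∀ i j, (Cb * Cb) i j = if i = -j then (r : 𝔽) else 0 := by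
    intro i j
    simp only [mul_apply, hCb, ← AddChar.map_add_eq_mul]
    have := AddChar.sum_mulShift (i + j) he
    rw [ZMod.card] at this
    simp only [eq_neg_iff_add_eq_zero]
    rw [Nat.cast_ite, Nat.cast_zero] at this
    rw [← this]
    refine Finset.sum_congr rfl fun x _ => ?_
    congr 1; ring
  have hr2 : weilRest (weilOdd_zmod hr) _ hE ∘ₗ weilRest (weilOdd_zmod hr) _ hE =
      (lam ^ 2 * (-(r : 𝔽))) • LinearMap.id := by
    rw [← weilRest_mul]
    ext f x
    have hsm : ∀ i j, ((lam • Cb) * (lam • Cb)) i j = if i = -j then lam ^ 2 * (r : 𝔽) else 0 := by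
      intro i j
      rw [Matrix.smul_mul, Matrix.mul_smul, Matrix.smul_apply, Matrix.smul_apply, hsq]
      split_ifs
      · simp only [smul_eq_mul]; ring
      · simp
    change ∑ b, ((lam • Cb) * (lam • Cb)) x b * f.1 b = (lam ^ 2 * (-(r : 𝔽))) * f.1 x
    simp only [hsm]
    rw [Finset.sum_eq_single (-x)]
    · rw [f.2.1, neg_neg, if_pos rfl]; ring
    · intro b _ hb
      rw [if_neg, zero_mul]
      rintro rfl; simp at hb
    · simp
  rw [sq, ← LinearMap.det_comp, hr2, LinearMap.det_smul, LinearMap.det_id, mul_one, det_smul]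
  have hc := weilO_finrank' (𝔽 := 𝔽) (weilOdd_zmod hr)
  rw [ZMod.card] at hc ⊢
  have hc' : Module.finrank 𝔽 (weilO 𝔽 (ZMod r)) = (r - 1) / 2 := by omega
  have hl : lam * Cb.det = (-(r : 𝔽)) ^ ((r - 1) / 2) := by
    rw [hlam, mul_assoc, inv_mul_cancel₀ hd, mul_one]
  rw [hc', mul_pow, ← hl, ← pow_mul]
  have : lam ^ r = lam ^ (2 * ((r - 1) / 2)) * lam := by
    rw [← pow_succ]; congr 1; omega
  rw [this, mul_assoc]

lemma weilChi_C (hr : Odd r) {l : Type*} [Fintype l] [DecidableEq l] (t : l)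
    (c : Matrix (ZMod r) (ZMod r) 𝔽) (hc : weilChi (weilOdd_zmod hr) c) :
    weilChi (weilOdd_fun hr l) (of fun η ξ : l → ZMod r =>
      if ∀ i, i ≠ t → η i = ξ i then c (η t) (ξ t) else 0) := by
  have hZY : weilOdd (ZMod r × ({j // j ≠ t} → ZMod r)) := by
    intro x hx
    exact Prod.ext (weilOdd_zmod hr _ (congrArg Prod.fst hx))
      (weilOdd_fun hr _ _ (congrArg Prod.snd hx))
  let e : (l → ZMod r) ≃+ ZMod r × ({j // j ≠ t} → ZMod r) :=
    { Equiv.funSplitAt t (ZMod r) with map_add' := fun _ _ => rfl }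
  have := weilChi_transport hZY (weilOdd_fun hr l) e
    (weilChi_prod (weilOdd_zmod hr) (weilOdd_fun hr _) hZY hc)
  convert this using 1
  ext η ξ
  simp only [of_apply, submatrix_apply]
  have he : ∀ x, e x = (x t, fun j => x j.1) := fun x => rfl
  simp only [he, funext_iff, Subtype.forall]

lemma weil_half_calc (hr : Odd r) {h : ZMod r} (hh : 2 * h = 1) (x : ZMod r) :
    ((x.val * (x.val + r) / 2 : ℕ) : ZMod r) = h * (x * x) := by
  have hev : 2 ∣ x.val * (x.val + r) := by
    rcases Nat.even_or_odd x.val with h1 | h1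
    · exact (h1.mul_right _).two_dvd
    · exact ((h1.add_odd hr).mul_left _).two_dvd
  obtain ⟨k, hk⟩ := hev
  rw [hk, Nat.mul_div_cancel_left _ (by norm_num)]
  have h1 := congrArg (fun n : ℕ => (n : ZMod r)) hk
  simp only [Nat.cast_mul, Nat.cast_add, ZMod.natCast_self, ZMod.natCast_val, ZMod.cast_id', id,
    add_zero, Nat.cast_ofNat] at h1
  rw [h1]
  linear_combination (-(k : ZMod r)) * hh

end WeilFinal

set_option maxHeartbeats 1000000 in
/-- The group `G` generated by `λC_t`, `U_t` and `D_{st}` is isomorphic to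
`Sp_{2ℓ}(ZMod r)`. -/
theorem weil_G_iso_symplectic
    {r : ℕ} [Fact (Nat.Prime r)] (hr : Odd r)
    {𝔽 : Type*} [Field 𝔽] {θ : 𝔽} (hθ : IsPrimitiveRoot θ r)
    {ℓ : ℕ} (hℓ : 1 ≤ ℓ)
    (Cb : Matrix (ZMod r) (ZMod r) 𝔽)
    (hCb : ∀ i j : ZMod r, Cb i j = θ ^ (i * j).val)
    (lam : 𝔽) (hlam : lam = (-(r : 𝔽)) ^ ((r - 1) / 2) * Cb.det⁻¹)
    (uC uU : Fin ℓ → (Matrix (Fin ℓ → ZMod r) (Fin ℓ → ZMod r) 𝔽)ˣ)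
    (uD : Fin ℓ → Fin ℓ → (Matrix (Fin ℓ → ZMod r) (Fin ℓ → ZMod r) 𝔽)ˣ)
    (huC : ∀ t, (uC t : Matrix (Fin ℓ → ZMod r) (Fin ℓ → ZMod r) 𝔽)
      = lam • Matrix.of fun η ξ =>
          if ∀ i, i ≠ t → η i = ξ i then θ ^ (η t * ξ t).val else 0)
    (huU : ∀ t, (uU t : Matrix (Fin ℓ → ZMod r) (Fin ℓ → ZMod r) 𝔽)
      = Matrix.diagonal fun ξ => θ ^ ((ξ t).val * ((ξ t).val + r) / 2))
    (huD : ∀ s t : Fin ℓ, s < t →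
      (uD s t : Matrix (Fin ℓ → ZMod r) (Fin ℓ → ZMod r) 𝔽)
        = Matrix.diagonal fun ξ => θ ^ (ξ s * ξ t).val)
    (G : Subgroup (Matrix (Fin ℓ → ZMod r) (Fin ℓ → ZMod r) 𝔽)ˣ)
    (hG : G = Subgroup.closure (Set.range uC ∪ Set.range uU ∪
      {x | ∃ s t : Fin ℓ, s < t ∧ x = uD s t})) :
    Nonempty (G ≃* Matrix.symplecticGroup (Fin ℓ) (ZMod r)) := by
  classical
  have hr2 := weil_two_ne hr
  obtain ⟨h, hh⟩ : ∃ h : ZMod r, 2 * h = 1 := ⟨2⁻¹, mul_inv_cancel₀ hr2⟩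
  obtain ⟨e, hee, hee', hprim⟩ : ∃ e : AddChar (ZMod r) 𝔽, (∀ x, e x = θ ^ x.val) ∧
      (∀ n : ℕ, e (n : ZMod r) = θ ^ n) ∧ e.IsPrimitive :=
    ⟨AddChar.zmodChar r hθ.pow_eq_one, AddChar.zmodChar_apply _, AddChar.zmodChar_apply' _,
      AddChar.zmodChar_primitive_of_primitive_root r hθ⟩
  have hinj : ∀ x, e x = 1 → x = 0 := by
    intro x hx
    rw [hee, ← pow_zero θ] at hx
    exact (ZMod.val_eq_zero x).1 (hθ.pow_inj (ZMod.val_lt x) (NeZero.pos _) hx)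
  have hX := weilOdd_fun hr (Fin ℓ)
  -- the determinant is nonzero
  have hdet : Cb.det ≠ 0 := by
    intro h0
    have h1 := (uC ⟨0, hℓ⟩).mul_inv
    rw [huC, hlam, h0] at h1
    simp at h1
  -- the three kinds of generators
  have hC : ∀ t, weilRel e h (uC t).1 (weilW (ZMod r) {t}) ∧ weilChi hX (uC t).1 := by
    intro t
    constructor
    · have h1 : weilRel e h _ (weilW (ZMod r) {t}) := weilRel_C hh lam t
      refine (congrArg (fun A => weilRel e h A (weilW (ZMod r) {t})) ?_).mpr h1
      rw [huC]
      refine congrArg (fun A => lam • A) ?_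
      ext η ξ
      rw [Matrix.of_apply, Matrix.of_apply, hee]
      by_cases hc : ∀ i, i ≠ t → η i = ξ i
      · rw [if_pos hc, if_pos hc]
      · rw [if_neg hc, if_neg hc]
    · have h1 := weilChi_C hr t (lam • Cb) (weilChi_base hr e hprim Cb
        (fun i j => by rw [hCb, hee]) lam hlam hdet)
      refine (congrArg (fun A => weilChi hX A) ?_).mpr h1
      rw [huC]
      ext η ξ
      rw [Matrix.smul_apply, Matrix.of_apply, Matrix.of_apply, Matrix.smul_apply, hCb]
      by_cases hc : ∀ i, i ≠ t → η i = ξ i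
      · rw [if_pos hc, if_pos hc]
      · rw [if_neg hc, if_neg hc, smul_zero]
  have hdiag : ∀ (u : (Matrix (Fin ℓ → ZMod r) (Fin ℓ → ZMod r) 𝔽)ˣ) (B : Matrix (Fin ℓ) (Fin ℓ) (ZMod r)),
      B.IsSymm → u.1 = Matrix.diagonal (fun ξ => e (h * (ξ ⬝ᵥ B.mulVec ξ))) →
      weilRel e h u.1 (weilL B) ∧ weilChi hX u.1 := by
    intro u B hB hu
    rw [hu]
    exact ⟨weilRel_diag hh B hB, weilChi_diag hX _ (fun x => by simp [Matrix.mulVec_neg]) (by simp)⟩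
  have hBs : ∀ s t : Fin ℓ, (Matrix.single s t (1 : ZMod r) + Matrix.single t s 1).IsSymm := by
    intro s t
    simp [Matrix.IsSymm, add_comm]
  have hBt : ∀ t : Fin ℓ, (Matrix.single t t (1 : ZMod r)).IsSymm := by
    intro t
    simp [Matrix.IsSymm]
  have hsingle : ∀ (s t : Fin ℓ) (ξ : Fin ℓ → ZMod r),
      ξ ⬝ᵥ (Matrix.single s t (1 : ZMod r)).mulVec ξ = ξ s * ξ t := by
    intro s t ξ
    rw [Matrix.single_mulVec]
    simp [dotProduct, Function.update_apply]
  have hU : ∀ t, weilRel e h (uU t).1 (weilL (Matrix.single t t 1)) ∧ weilChi hX (uU t).1 := by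
    intro t
    refine hdiag _ _ (hBt t) ?_
    rw [huU]
    refine congrArg Matrix.diagonal (funext fun ξ => ?_)
    rw [hsingle, ← weil_half_calc hr hh, hee']
  have hD : ∀ s t, s < t → weilRel e h (uD s t).1 (weilL (Matrix.single s t 1 + Matrix.single t s 1))
      ∧ weilChi hX (uD s t).1 := by
    intro s t hst
    refine hdiag _ _ (hBs s t) ?_
    rw [huD s t hst]
    refine congrArg Matrix.diagonal (funext fun ξ => ?_)
    rw [Matrix.add_mulVec, dotProduct_add, hsingle, hsingle, ← hee (ξ s * ξ t)]
    refine congrArg e ?_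
    linear_combination (-(ξ s * ξ t)) * hh
  -- the graph
  let gC : Fin ℓ → (Matrix (Fin ℓ → ZMod r) (Fin ℓ → ZMod r) 𝔽)ˣ × Matrix.symplecticGroup (Fin ℓ) (ZMod r) :=
    fun t => (uC t, ⟨_, weilW_mem {t}⟩)
  let gU : Fin ℓ → (Matrix (Fin ℓ → ZMod r) (Fin ℓ → ZMod r) 𝔽)ˣ × Matrix.symplecticGroup (Fin ℓ) (ZMod r) :=
    fun t => (uU t, ⟨_, weilL_mem (hBt t)⟩)
  let gD : Fin ℓ → Fin ℓ → (Matrix (Fin ℓ → ZMod r) (Fin ℓ → ZMod r) 𝔽)ˣ × Matrix.symplecticGroup (Fin ℓ) (ZMod r) :=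
    fun s t => (uD s t, ⟨_, weilL_mem (hBs s t)⟩)
  let gens := Set.range gC ∪ Set.range gU ∪ {x | ∃ s t : Fin ℓ, s < t ∧ x = gD s t}
  let K := Subgroup.closure gens
  have hK : ∀ x ∈ K, weilRel e h x.1.1 x.2.1 ∧ weilChi hX x.1.1 := by
    intro x hx
    induction hx using Subgroup.closure_induction with
    | mem x hx =>
      rcases hx with (⟨t, rfl⟩ | ⟨t, rfl⟩) | ⟨s, t, hst, rfl⟩
      · exact hC t
      · exact hU t
      · exact hD s t hst
    | one => exact ⟨weilRel_one e h, weilChi_one hX⟩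
    | mul x y _ _ hx hy => exact ⟨weilRel_mul hx.1 hy.1, weilChi_mul hX hx.2 hy.2⟩
    | inv x _ hx =>
      refine ⟨weilRel_inv hx.1 x.1.mul_inv x.1.inv_mul ?_, weilChi_inv hX hx.2 x.1.mul_inv⟩
      exact congrArg Subtype.val (mul_inv_cancel x.2)
  have hmapG : K.map (MonoidHom.fst _ _) = G := by
    rw [hG, MonoidHom.map_closure]
    congr 1
    ext x
    constructor
    · rintro ⟨y, (⟨t, rfl⟩ | ⟨t, rfl⟩) | ⟨s, t, hst, rfl⟩, rfl⟩
      · exact Or.inl (Or.inl ⟨t, rfl⟩)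
      · exact Or.inl (Or.inr ⟨t, rfl⟩)
      · exact Or.inr ⟨s, t, hst, rfl⟩
    · rintro ((⟨t, rfl⟩ | ⟨t, rfl⟩) | ⟨s, t, hst, rfl⟩)
      · exact ⟨gC t, Or.inl (Or.inl ⟨t, rfl⟩), rfl⟩
      · exact ⟨gU t, Or.inl (Or.inr ⟨t, rfl⟩), rfl⟩
      · exact ⟨gD s t, Or.inr ⟨s, t, hst, rfl⟩, rfl⟩
  have hsurj : ∀ M : Matrix.symplecticGroup (Fin ℓ) (ZMod r), ∃ x ∈ K, x.2 = M := by
    let S : Submonoid (Matrix (Fin ℓ ⊕ Fin ℓ) (Fin ℓ ⊕ Fin ℓ) (ZMod r)) :=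
      K.toSubmonoid.map ((Matrix.symplecticGroup (Fin ℓ) (ZMod r)).subtype.comp (MonoidHom.snd _ _))
    have hUS : ∀ t, weilL (Matrix.single t t (1 : ZMod r)) ∈ S := fun t =>
      ⟨gU t, Subgroup.subset_closure (Or.inl (Or.inr ⟨t, rfl⟩)), rfl⟩
    have hDS : ∀ s t, s < t → weilL (Matrix.single s t (1 : ZMod r) + Matrix.single t s 1) ∈ S :=
      fun s t hst => ⟨gD s t, Subgroup.subset_closure (Or.inr ⟨s, t, hst, rfl⟩), rfl⟩
    have hle := weil_sp_le hr S (fun i j => by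
      rcases lt_trichotomy i j with hij | hij | hij
      · exact hDS i j hij
      · subst hij
        rw [weilL_add]
        exact S.mul_mem (hUS i) (hUS i)
      · rw [add_comm]; exact hDS j i hij) (fun t =>
      ⟨gC t, Subgroup.subset_closure (Or.inl (Or.inl ⟨t, rfl⟩)), rfl⟩)
    intro M
    obtain ⟨x, hx, hxM⟩ := hle M.2
    exact ⟨x, hx, Subtype.ext hxM⟩
  let f1 : K →* G := ((MonoidHom.fst _ _).comp K.subtype).codRestrict G (fun x => by
    rw [← hmapG]; exact ⟨x.1, x.2, rfl⟩)
  let f2 : K →* Matrix.symplecticGroup (Fin ℓ) (ZMod r) := (MonoidHom.snd _ _).comp K.subtype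
  have hf1 : Function.Bijective f1 := by
    constructor
    · rintro ⟨⟨g, M⟩, hx⟩ ⟨⟨g', M'⟩, hy⟩ hxy
      have hg : g = g' := congrArg Subtype.val hxy
      subst hg
      have : M = M' := Subtype.ext (weilRel_unique hinj (hK _ hx).1 (hK _ hy).1 g.mul_inv)
      subst this; rfl
    · rintro ⟨g, hg⟩
      rw [← hmapG] at hg
      obtain ⟨x, hx, rfl⟩ := hg
      exact ⟨⟨x, hx⟩, rfl⟩
  have hf2 : Function.Bijective f2 := by
    constructor
    · rw [injective_iff_map_eq_one]
      rintro ⟨⟨g, M⟩, hx⟩ hxy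
      have hM : M = 1 := hxy
      subst hM
      obtain ⟨hrel, hchi⟩ := hK _ hx
      obtain ⟨c, hc⟩ := weilRel_scalar hinj hrel
      have hc0 : c ≠ 0 := by
        rintro rfl
        have h1 := g.mul_inv
        simp only at hc
        rw [hc] at h1
        simp at h1
      simp only at hc hchi
      rw [hc] at hchi
      have := weilChi_scalar hX c hchi hc0
      have hg : g = 1 := Units.ext (by rw [hc, this, one_smul]; rfl)
      subst hg; rfl
    · intro M
      obtain ⟨x, hx, rfl⟩ := hsurj M
      exact ⟨⟨x, hx⟩, rfl⟩
  exact ⟨(MulEquiv.ofBijective f1 hf1).symm.trans (MulEquiv.ofBijective f2 hf2)⟩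
end

section
/- The subgroup R has cardinality r^{1+2ℓ}; every element x ∈ R satisfies x^r = 1; and the center of R equals the commutator subgroup of R and equals the subgroup generated by the scalar unit θ·I, which is cyclic of order r. (In particular R is an extraspecial r-group of exponent r and order r^{1+2ℓ}.) -/
open Matrix in
/-- The matrix sending the basis vector `ξ` to `θ^(c + a·ξ)` times the basis vector `ξ + b`. -/
def weilMat {r : ℕ} {𝔽 : Type*} [Field 𝔽] (θ : 𝔽) {ℓ : ℕ} (c : ZMod r)
    (a b : Fin ℓ → ZMod r) : Matrix (Fin ℓ → ZMod r) (Fin ℓ → ZMod r) 𝔽 :=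
  Matrix.of fun η ξ => if η = ξ + b then θ ^ (c + a ⬝ᵥ ξ).val else 0

theorem weil_chi_add {r : ℕ} [Fact (Nat.Prime r)] {𝔽 : Type*} [Field 𝔽] {θ : 𝔽}
    (hθ : IsPrimitiveRoot θ r) (x y : ZMod r) :
    θ ^ (x + y).val = θ ^ x.val * θ ^ y.val := by
  have h := pow_mod_orderOf θ (x.val + y.val)
  rw [← hθ.eq_orderOf] at h
  rw [ZMod.val_add, ← pow_add, h]

theorem weil_chi_inj {r : ℕ} [Fact (Nat.Prime r)] {𝔽 : Type*} [Field 𝔽] {θ : 𝔽}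
    (hθ : IsPrimitiveRoot θ r) {x y : ZMod r} (h : θ ^ x.val = θ ^ y.val) : x = y :=
  ZMod.val_injective r (hθ.pow_inj (ZMod.val_lt x) (ZMod.val_lt y) h)

open Matrix in
theorem weilMat_mul {r : ℕ} [Fact (Nat.Prime r)] {𝔽 : Type*} [Field 𝔽] {θ : 𝔽}
    (hθ : IsPrimitiveRoot θ r) {ℓ : ℕ} (c c' : ZMod r) (a b a' b' : Fin ℓ → ZMod r) :
    weilMat θ c a b * weilMat θ c' a' b'
      = weilMat θ (c + c' + a ⬝ᵥ b') (a + a') (b + b') := by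
  ext η ξ
  rw [Matrix.mul_apply, Finset.sum_eq_single (ξ + b')]
  · simp only [weilMat, Matrix.of_apply, if_true]
    have e : ξ + b' + b = ξ + (b + b') := by abel
    rw [e]
    split_ifs
    · rw [← weil_chi_add hθ]
      congr 2
      rw [dotProduct_add, add_dotProduct]
      ring
    · simp
  · intro ζ _ hζ
    simp [weilMat, hζ]
  · simp

theorem weilMat_one {r : ℕ} [Fact (Nat.Prime r)] {𝔽 : Type*} [Field 𝔽] (θ : 𝔽) {ℓ : ℕ} :
    weilMat θ (0 : ZMod r) (0 : Fin ℓ → ZMod r) 0 = 1 := by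
  ext η ξ
  simp [weilMat, Matrix.one_apply]

open Matrix in
/-- `weilMat` as a unit. -/
def weilUnit {r : ℕ} [Fact (Nat.Prime r)] {𝔽 : Type*} [Field 𝔽] {θ : 𝔽}
    (hθ : IsPrimitiveRoot θ r) {ℓ : ℕ} (c : ZMod r) (a b : Fin ℓ → ZMod r) :
    (Matrix (Fin ℓ → ZMod r) (Fin ℓ → ZMod r) 𝔽)ˣ where
  val := weilMat θ c a b
  inv := weilMat θ (-c + a ⬝ᵥ b) (-a) (-b)
  val_inv := by
    rw [weilMat_mul hθ, ← weilMat_one θ]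
    congr 1 <;> simp
  inv_val := by
    rw [weilMat_mul hθ, ← weilMat_one θ]
    congr 1 <;> simp

section weil
open Matrix
open scoped commutatorElement
variable {r : ℕ} [Fact (Nat.Prime r)] {𝔽 : Type*} [Field 𝔽] {θ : 𝔽}
    (hθ : IsPrimitiveRoot θ r) {ℓ : ℕ}

theorem weilUnit_mul (c c' : ZMod r) (a b a' b' : Fin ℓ → ZMod r) :
    weilUnit hθ c a b * weilUnit hθ c' a' b'
      = weilUnit hθ (c + c' + a ⬝ᵥ b') (a + a') (b + b') :=
  Units.ext (weilMat_mul hθ c c' a b a' b')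

theorem weilUnit_one : weilUnit hθ 0 (0 : Fin ℓ → ZMod r) 0 = 1 :=
  Units.ext (weilMat_one θ)

theorem weilUnit_inv (c : ZMod r) (a b : Fin ℓ → ZMod r) :
    (weilUnit hθ c a b)⁻¹ = weilUnit hθ (-c + a ⬝ᵥ b) (-a) (-b) := by
  rw [inv_eq_iff_mul_eq_one, weilUnit_mul, ← weilUnit_one hθ]
  congr 1 <;> simp

theorem weilUnit_inj {c c' : ZMod r} {a b a' b' : Fin ℓ → ZMod r}
    (h : weilUnit hθ c a b = weilUnit hθ c' a' b') : c = c' ∧ a = a' ∧ b = b' := by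
  have h0 : θ ≠ 0 := hθ.ne_zero (Fact.out : Nat.Prime r).ne_zero
  have h1 : weilMat θ c a b = weilMat θ c' a' b' := congrArg Units.val h
  have hb : b = b' := by
    have := congrFun (congrFun h1 b) 0
    by_contra hne
    simp [weilMat, hne, h0] at this
  subst hb
  have h2 : ∀ ξ, c + a ⬝ᵥ ξ = c' + a' ⬝ᵥ ξ := by
    intro ξ
    have := congrFun (congrFun h1 (ξ + b)) ξ
    simp only [weilMat, Matrix.of_apply, if_true] at this
    exact weil_chi_inj hθ this
  have hc : c = c' := by simpa using h2 0
  subst hc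
  refine ⟨rfl, ?_, rfl⟩
  ext t
  simpa using h2 (Pi.single t 1)

theorem weilUnit_pow (c : ZMod r) (a b : Fin ℓ → ZMod r) (n : ℕ) :
    weilUnit hθ c a b ^ n
      = weilUnit hθ (n * c + (n.choose 2 : ℕ) * (a ⬝ᵥ b)) (n • a) (n • b) := by
  induction n with
  | zero => simp [weilUnit_one]
  | succ n ih =>
    rw [pow_succ, ih, weilUnit_mul]
    congr 1
    · rw [Nat.choose_succ_succ' n 1, smul_dotProduct]
      simp
      ring
    · rw [succ_nsmul]
    · rw [succ_nsmul]

theorem weilUnit_pow_card (hr : Odd r) (c : ZMod r) (a b : Fin ℓ → ZMod r) :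
    weilUnit hθ c a b ^ r = 1 := by
  have hc : ((r.choose 2 : ℕ) : ZMod r) = 0 := by
    rw [ZMod.natCast_eq_zero_iff]
    have h2 := (Fact.out : Nat.Prime r).two_le
    have : r ≠ 2 := by rintro rfl; exact absurd hr (by decide)
    exact (Fact.out : Nat.Prime r).dvd_choose_self (by norm_num) (by omega)
  rw [weilUnit_pow, ← weilUnit_one hθ, hc]
  congr 1
  · simp
  · ext; simp
  · ext; simp

/-- The explicit Heisenberg group. -/
def weilGroup (ℓ : ℕ) : Subgroup (Matrix (Fin ℓ → ZMod r) (Fin ℓ → ZMod r) 𝔽)ˣ where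
  carrier := {x | ∃ c a b, x = weilUnit hθ c a b}
  mul_mem' := by
    rintro _ _ ⟨c, a, b, rfl⟩ ⟨c', a', b', rfl⟩
    exact ⟨_, _, _, weilUnit_mul hθ _ _ _ _ _ _⟩
  one_mem' := ⟨0, 0, 0, (weilUnit_one hθ).symm⟩
  inv_mem' := by
    rintro _ ⟨c, a, b, rfl⟩
    exact ⟨_, _, _, weilUnit_inv hθ _ _ _⟩

theorem weil_vec_mem (S : AddSubmonoid (Fin ℓ → ZMod r))
    (h : ∀ t, Pi.single t 1 ∈ S) (a : Fin ℓ → ZMod r) : a ∈ S := by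
  rw [← Finset.univ_sum_single a]
  refine S.sum_mem fun t _ => ?_
  have : (Pi.single t (a t) : Fin ℓ → ZMod r) = (a t).val • Pi.single t 1 := by
    rw [← Pi.single_smul]
    simp
  rw [this]
  exact S.nsmul_mem (h t) _

theorem weilUnit_scalar (c : ZMod r) :
    weilUnit hθ c (0 : Fin ℓ → ZMod r) 0 = weilUnit hθ 1 0 0 ^ c.val := by
  rw [weilUnit_pow]
  congr 1 <;> simp

theorem weilUnit_comm_gen (t : Fin ℓ) :
    ⁅weilUnit hθ 0 (Pi.single t 1) 0, weilUnit hθ 0 0 (Pi.single t 1)⁆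
      = weilUnit hθ 1 0 0 := by
  rw [commutatorElement_def, mul_inv_eq_iff_eq_mul, mul_inv_eq_iff_eq_mul]
  simp only [weilUnit_mul]
  congr 1 <;> simp

theorem weilGroup_eq_closure (hℓ : 1 ≤ ℓ) :
    weilGroup hθ ℓ = Subgroup.closure
      (Set.range (fun t => weilUnit hθ 0 (Pi.single t 1) 0) ∪
       Set.range (fun t => weilUnit hθ 0 0 (Pi.single t 1))) := by
  apply le_antisymm
  · set K := Subgroup.closure
      (Set.range (fun t : Fin ℓ => weilUnit hθ 0 (Pi.single t 1) 0) ∪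
       Set.range (fun t => weilUnit hθ 0 0 (Pi.single t 1))) with hK
    have hA : ∀ t, weilUnit hθ 0 (Pi.single t 1) 0 ∈ K := fun t =>
      Subgroup.subset_closure (Or.inl ⟨t, rfl⟩)
    have hB : ∀ t, weilUnit hθ 0 0 (Pi.single t 1) ∈ K := fun t =>
      Subgroup.subset_closure (Or.inr ⟨t, rfl⟩)
    have hz : weilUnit hθ 1 (0 : Fin ℓ → ZMod r) 0 ∈ K := by
      rw [← weilUnit_comm_gen hθ ⟨0, hℓ⟩, commutatorElement_def]
      exact K.mul_mem (K.mul_mem (K.mul_mem (hA _) (hB _)) (K.inv_mem (hA _))) (K.inv_mem (hB _))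
    have hA' : ∀ a, weilUnit hθ 0 a 0 ∈ K := by
      let S : AddSubmonoid (Fin ℓ → ZMod r) :=
        { carrier := {a | weilUnit hθ 0 a 0 ∈ K}
          zero_mem' := by simp [weilUnit_one]
          add_mem' := by
            intro a b ha hb
            have := K.mul_mem ha hb
            rw [weilUnit_mul] at this
            simpa using this }
      exact weil_vec_mem S hA
    have hB' : ∀ a, weilUnit hθ 0 0 a ∈ K := by
      let S : AddSubmonoid (Fin ℓ → ZMod r) :=
        { carrier := {a | weilUnit hθ 0 0 a ∈ K}
          zero_mem' := by simp [weilUnit_one]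
          add_mem' := by
            intro a b ha hb
            have := K.mul_mem ha hb
            rw [weilUnit_mul] at this
            simpa using this }
      exact weil_vec_mem S hB
    rintro _ ⟨c, a, b, rfl⟩
    have : weilUnit hθ c a b
        = weilUnit hθ c 0 0 * (weilUnit hθ 0 0 b * weilUnit hθ 0 a 0) := by
      simp [weilUnit_mul]
    rw [this, weilUnit_scalar]
    exact K.mul_mem (K.pow_mem hz _) (K.mul_mem (hB' b) (hA' a))
  · rw [Subgroup.closure_le]
    rintro _ (⟨t, rfl⟩ | ⟨t, rfl⟩)
    · exact ⟨_, _, _, rfl⟩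
    · exact ⟨_, _, _, rfl⟩

theorem weilGroup_card : Nat.card (weilGroup hθ ℓ) = r ^ (1 + 2 * ℓ) := by
  let e : ZMod r × (Fin ℓ → ZMod r) × (Fin ℓ → ZMod r) ≃ weilGroup hθ ℓ :=
    Equiv.ofBijective (fun p => ⟨weilUnit hθ p.1 p.2.1 p.2.2, _, _, _, rfl⟩) (by
      constructor
      · rintro ⟨c, a, b⟩ ⟨c', a', b'⟩ h
        obtain ⟨rfl, rfl, rfl⟩ := weilUnit_inj hθ (congrArg Subtype.val h)
        rfl
      · rintro ⟨_, c, a, b, rfl⟩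
        exact ⟨(c, a, b), rfl⟩)
  rw [← Nat.card_congr e]
  simp [Nat.card_eq_fintype_card, ZMod.card]
  ring

theorem weilGroup_mem_center {x : weilGroup hθ ℓ} (hx : x ∈ Subgroup.center (weilGroup hθ ℓ)) :
    ∃ c, (x : (Matrix (Fin ℓ → ZMod r) (Fin ℓ → ZMod r) 𝔽)ˣ) = weilUnit hθ c 0 0 := by
  obtain ⟨_, c, a, b, rfl⟩ := x
  rw [Subgroup.mem_center_iff] at hx
  have key : ∀ a' b' : Fin ℓ → ZMod r, a' ⬝ᵥ b = a ⬝ᵥ b' := by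
    intro a' b'
    have := congrArg Subtype.val (hx ⟨weilUnit hθ 0 a' b', _, _, _, rfl⟩)
    simp only [Subgroup.coe_mul, weilUnit_mul] at this
    simpa using (weilUnit_inj hθ this).1
  have ha : a = 0 := by
    ext t
    simpa using (key 0 (Pi.single t 1)).symm
  have hb : b = 0 := by
    ext t
    simpa using key (Pi.single t 1) 0
  exact ⟨c, by simp [ha, hb]⟩

/-- The scalar `θ·I` as an element of the group. -/
def weilZ (ℓ : ℕ) : weilGroup hθ ℓ := ⟨weilUnit hθ 1 0 0, _, _, _, rfl⟩

theorem weil_scalar_mem (c : ZMod r)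
    (hc : weilUnit hθ c (0 : Fin ℓ → ZMod r) 0 ∈ weilGroup hθ ℓ) :
    (⟨_, hc⟩ : weilGroup hθ ℓ) ∈ Subgroup.closure {weilZ hθ ℓ} := by
  have he : (⟨_, hc⟩ : weilGroup hθ ℓ) = weilZ hθ ℓ ^ c.val :=
    Subtype.ext (weilUnit_scalar hθ c)
  rw [he]
  exact Subgroup.pow_mem _ (Subgroup.subset_closure (Set.mem_singleton _)) _

theorem weil_center : Subgroup.center (weilGroup hθ ℓ) = Subgroup.closure {weilZ hθ ℓ} := by
  apply le_antisymm
  · rintro ⟨x, hx'⟩ hx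
    obtain ⟨c, hc⟩ := weilGroup_mem_center hθ hx
    simp only at hc
    subst hc
    exact weil_scalar_mem hθ c hx'
  · rw [Subgroup.closure_le, Set.singleton_subset_iff]
    rw [SetLike.mem_coe, Subgroup.mem_center_iff]
    rintro ⟨_, c, a, b, rfl⟩
    apply Subtype.ext
    simp only [weilZ, Subgroup.coe_mul, weilUnit_mul]
    congr 1 <;> simp [add_comm]

theorem weil_center_comm (hℓ : 1 ≤ ℓ) :
    Subgroup.center (weilGroup hθ ℓ) = commutator (weilGroup hθ ℓ) := by
  apply le_antisymm
  · rw [weil_center, Subgroup.closure_le, Set.singleton_subset_iff]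
    have h1 : weilUnit hθ 0 (Pi.single ⟨0, hℓ⟩ 1) (0 : Fin ℓ → ZMod r) ∈ weilGroup hθ ℓ :=
      ⟨_, _, _, rfl⟩
    have h2 : weilUnit hθ 0 (0 : Fin ℓ → ZMod r) (Pi.single ⟨0, hℓ⟩ 1) ∈ weilGroup hθ ℓ :=
      ⟨_, _, _, rfl⟩
    have : weilZ hθ ℓ = ⁅(⟨_, h1⟩ : weilGroup hθ ℓ), ⟨_, h2⟩⁆ := by
      apply Subtype.ext
      exact (weilUnit_comm_gen hθ ⟨0, hℓ⟩).symm
    rw [this, SetLike.mem_coe, commutator_def]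
    exact Subgroup.commutator_mem_commutator (Subgroup.mem_top _) (Subgroup.mem_top _)
  · rw [commutator_def, Subgroup.commutator_le]
    rintro ⟨_, c, a, b, rfl⟩ - ⟨_, c', a', b', rfl⟩ -
    have hm : weilUnit hθ (dotProduct a b' - dotProduct a' b) (0 : Fin ℓ → ZMod r) 0 ∈ weilGroup hθ ℓ :=
      ⟨_, _, _, rfl⟩
    have : ⁅(⟨weilUnit hθ c a b, c, a, b, rfl⟩ : weilGroup hθ ℓ),
        (⟨weilUnit hθ c' a' b', c', a', b', rfl⟩ : weilGroup hθ ℓ)⁆ = ⟨_, hm⟩ := by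
      rw [commutatorElement_def, mul_inv_eq_iff_eq_mul, mul_inv_eq_iff_eq_mul]
      apply Subtype.ext
      simp only [Subgroup.coe_mul, weilUnit_mul]
      congr 1
      · simp
        ring
      · simp [add_comm]
      · simp [add_comm]
    rw [this, weil_center]
    exact weil_scalar_mem hθ _ hm

end weil


/-- `R` is an extraspecial `r`-group of exponent `r` and order `r^{1+2ℓ}`:
`|R| = r^{1+2ℓ}`, every `x ∈ R` satisfies `x^r = 1`, and the center of `R` equals
the commutator subgroup of `R` and equals the subgroup generated by `θ·I`,
which is cyclic of order `r`. -/
theorem weil_R_extraspecial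
    {r : ℕ} [Fact (Nat.Prime r)] (hr : Odd r)
    {𝔽 : Type*} [Field 𝔽] {θ : 𝔽} (hθ : IsPrimitiveRoot θ r)
    {ℓ : ℕ} (hℓ : 1 ≤ ℓ)
    (uA uB : Fin ℓ → (Matrix (Fin ℓ → ZMod r) (Fin ℓ → ZMod r) 𝔽)ˣ)
    (huA : ∀ t, (uA t : Matrix (Fin ℓ → ZMod r) (Fin ℓ → ZMod r) 𝔽)
      = Matrix.diagonal fun ξ => θ ^ (ξ t).val)
    (huB : ∀ t η ξ, (uB t : Matrix (Fin ℓ → ZMod r) (Fin ℓ → ZMod r) 𝔽) η ξ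
      = if η t = ξ t + 1 ∧ ∀ i, i ≠ t → η i = ξ i then 1 else 0)
    (θI : (Matrix (Fin ℓ → ZMod r) (Fin ℓ → ZMod r) 𝔽)ˣ)
    (hθI : (θI : Matrix (Fin ℓ → ZMod r) (Fin ℓ → ZMod r) 𝔽) = θ • 1)
    (R : Subgroup (Matrix (Fin ℓ → ZMod r) (Fin ℓ → ZMod r) 𝔽)ˣ)
    (hR : R = Subgroup.closure (Set.range uA ∪ Set.range uB)) :
    Nat.card R = r ^ (1 + 2 * ℓ) ∧
      (∀ x ∈ R, x ^ r = 1) ∧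
      ∃ h : θI ∈ R,
        Subgroup.center R = commutator R ∧
        Subgroup.center R = Subgroup.closure {(⟨θI, h⟩ : R)} ∧
        IsCyclic (Subgroup.center R) ∧
        Nat.card (Subgroup.center R) = r := by
  have hA : uA = fun t => weilUnit hθ 0 (Pi.single t 1) 0 := by
    ext t η ξ
    rw [huA]
    simp [weilUnit, weilMat, Matrix.diagonal_apply]
    split_ifs with h
    · rw [h]
    · rfl
  have hB : uB = fun t => weilUnit hθ 0 0 (Pi.single t 1) := by
    ext t η ξ
    rw [huB]
    have : (η t = ξ t + 1 ∧ ∀ i, i ≠ t → η i = ξ i) ↔ η = ξ + Pi.single t 1 := by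
      constructor
      · rintro ⟨h1, h2⟩
        ext i
        by_cases hi : i = t
        · subst hi; simp [h1]
        · simp [hi, h2 i hi]
      · rintro rfl
        refine ⟨by simp, fun i hi => by simp [hi]⟩
    simp only [this]
    simp [weilUnit, weilMat]
  have hI : θI = weilUnit hθ 1 0 0 := by
    have : Fact (1 < r) := ⟨(Fact.out : Nat.Prime r).one_lt⟩
    ext η ξ
    rw [hθI]
    simp [weilUnit, weilMat, Matrix.one_apply, ZMod.val_one]
  rw [hA, hB, ← weilGroup_eq_closure hθ hℓ] at hR
  subst hR hI
  have hne : weilUnit hθ 1 (0 : Fin ℓ → ZMod r) 0 ≠ 1 := by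
    rw [← weilUnit_one hθ]
    intro he
    exact one_ne_zero (weilUnit_inj hθ he).1
  refine ⟨weilGroup_card hθ, ?_, (weilZ hθ ℓ).2, weil_center_comm hθ hℓ, weil_center hθ, ?_, ?_⟩
  · rintro _ ⟨c, a, b, rfl⟩
    exact weilUnit_pow_card hθ hr c a b
  · rw [weil_center, ← Subgroup.zpowers_eq_closure]
    infer_instance
  · rw [weil_center, ← Subgroup.zpowers_eq_closure, Nat.card_zpowers]
    apply orderOf_eq_prime
    · apply Subtype.ext
      exact weilUnit_pow_card hθ hr _ _ _
    · intro he
      exact hne (congrArg Subtype.val he)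
end

section
/- The 𝔽-subalgebra of the algebra of square matrices indexed by Fin ℓ → ZMod r generated by the matrices A_t and B_t for 1 ≤ t ≤ ℓ is the full matrix algebra (i.e., the subalgebra generated by {A_1,…,A_ℓ,B_1,…,B_ℓ} equals ⊤). In particular the group R they generate is absolutely irreducible on 𝔽^{r^ℓ}. -/
/-- The subalgebra generated by the `A_t` and `B_t` is the full matrix algebra. -/
theorem weil_adjoin_AB_eq_top
    {r : ℕ} [Fact (Nat.Prime r)] (hr : Odd r)
    {𝔽 : Type*} [Field 𝔽] {θ : 𝔽} (hθ : IsPrimitiveRoot θ r)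
    {ℓ : ℕ} (hℓ : 1 ≤ ℓ)
    (A : Fin ℓ → Matrix (Fin ℓ → ZMod r) (Fin ℓ → ZMod r) 𝔽)
    (hA : ∀ t, A t = Matrix.diagonal fun ξ => θ ^ (ξ t).val)
    (B : Fin ℓ → Matrix (Fin ℓ → ZMod r) (Fin ℓ → ZMod r) 𝔽)
    (hB : ∀ t η ξ, B t η ξ =
      if η t = ξ t + 1 ∧ ∀ i, i ≠ t → η i = ξ i then 1 else 0) :
    Algebra.adjoin 𝔽 (Set.range A ∪ Set.range B) = ⊤ := by
  classical
  set S := Algebra.adjoin 𝔽 (Set.range A ∪ Set.range B) with hS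
  -- diagonal part
  let D : Subalgebra 𝔽 ((Fin ℓ → ZMod r) → 𝔽) :=
    S.comap (Matrix.diagonalAlgHom (n := Fin ℓ → ZMod r) (α := 𝔽) 𝔽)
  have hD : ∀ f, f ∈ D ↔ Matrix.diagonal f ∈ S := fun f => Iff.rfl
  have hg : ∀ t, (fun ξ : Fin ℓ → ZMod r => θ ^ (ξ t).val) ∈ D := by
    intro t
    rw [hD, ← hA t]
    exact Algebra.subset_adjoin (Or.inl ⟨t, rfl⟩)
  have hinj : ∀ a b : ZMod r, θ ^ a.val = θ ^ b.val → a = b := by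
    intro a b h
    exact ZMod.val_injective r (hθ.pow_inj (ZMod.val_lt a) (ZMod.val_lt b) h)
  have hdiag : ∀ η : Fin ℓ → ZMod r,
      (fun ξ => if ξ = η then (1 : 𝔽) else 0) ∈ D := by
    intro η
    let f : (Fin ℓ → ZMod r) → 𝔽 := ∏ t : Fin ℓ, ∏ d ∈ Finset.univ.erase (η t),
      ((fun ξ : Fin ℓ → ZMod r => θ ^ (ξ t).val) - algebraMap 𝔽 _ (θ ^ d.val))
    have hf : f ∈ D := by
      refine Subalgebra.prod_mem _ fun t _ => Subalgebra.prod_mem _ fun d _ => ?_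
      exact D.sub_mem (hg t) (D.algebraMap_mem _)
    have hfe : ∀ ξ, f ξ = ∏ t : Fin ℓ, ∏ d ∈ Finset.univ.erase (η t),
        (θ ^ (ξ t).val - θ ^ d.val) := by
      intro ξ
      simp [f, Finset.prod_apply]
    have h0 : f η ≠ 0 := by
      rw [hfe]
      refine Finset.prod_ne_zero_iff.2 fun t _ => Finset.prod_ne_zero_iff.2 fun d hd => ?_
      intro h
      exact (Finset.mem_erase.1 hd).1 (hinj _ _ (sub_eq_zero.1 h)).symm
    have h1 : ∀ ξ, ξ ≠ η → f ξ = 0 := by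
      intro ξ h
      obtain ⟨t, ht⟩ := Function.ne_iff.1 h
      rw [hfe]
      refine Finset.prod_eq_zero (Finset.mem_univ t) ?_
      exact Finset.prod_eq_zero (i := ξ t) (by simp [ht]) (sub_self _)
    have : (fun ξ => if ξ = η then (1 : 𝔽) else 0) = (f η)⁻¹ • f := by
      funext ξ
      by_cases h : ξ = η
      · subst h; simp [h0]
      · simp [h, h1 ξ h]
    rw [this]
    exact D.smul_mem hf _
  -- translations
  let P : (Fin ℓ → ZMod r) → Matrix (Fin ℓ → ZMod r) (Fin ℓ → ZMod r) 𝔽 :=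
    fun v => Matrix.of fun η ξ => if η = ξ + v then 1 else 0
  have hP0 : P 0 = 1 := by
    ext η ξ
    simp [P, Matrix.one_apply]
  have hPadd : ∀ v w, P (v + w) = P v * P w := by
    intro v w
    ext η ξ
    simp only [P, Matrix.mul_apply, Matrix.of_apply, mul_ite, mul_one, mul_zero]
    rw [Finset.sum_ite_eq' Finset.univ (ξ + w)]
    simp [add_assoc, add_comm v w]
  let M : AddSubmonoid (Fin ℓ → ZMod r) :=
    { carrier := {v | P v ∈ S}
      zero_mem' := by
        change P 0 ∈ S
        rw [hP0]; exact S.one_mem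
      add_mem' := by
        intro v w hv hw
        change P (v + w) ∈ S
        rw [hPadd]; exact S.mul_mem hv hw }
  have hPB : ∀ t, Pi.single t (1 : ZMod r) ∈ M := by
    intro t
    change P _ ∈ S
    have : P (Pi.single t 1) = B t := by
      ext η ξ
      rw [hB]
      simp only [P, Matrix.of_apply]
      congr 1
      refine propext ⟨fun h => ?_, fun h => ?_⟩
      · subst h
        refine ⟨by simp, fun i hi => by simp [hi]⟩
      · funext i
        by_cases hi : i = t
        · subst hi; simp [h.1]
        · simp [hi, h.2 i hi]
    rw [this]
    exact Algebra.subset_adjoin (Or.inr ⟨t, rfl⟩)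
  have hPM : ∀ v, P v ∈ S := by
    intro v
    change v ∈ M
    rw [← Finset.univ_sum_single v]
    refine M.sum_mem fun t _ => ?_
    have : Pi.single t (v t) = (v t).val • (Pi.single t (1 : ZMod r) : Fin ℓ → ZMod r) := by
      rw [← Pi.single_smul]
      simp
    rw [this]
    exact M.nsmul_mem (hPB t) _
  refine Algebra.eq_top_iff.2 fun X => ?_
  rw [Matrix.matrix_eq_sum_single X]
  refine S.sum_mem fun η _ => S.sum_mem fun ξ _ => ?_
  have : Matrix.single η ξ (X η ξ) = X η ξ •
      (Matrix.diagonal (fun ζ => if ζ = η then (1 : 𝔽) else 0) * P (η - ξ)) := by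
    ext a b
    rw [Matrix.smul_apply, Matrix.diagonal_mul, Matrix.single_apply]
    simp only [P, Matrix.of_apply]
    by_cases h : a = η
    · subst h
      by_cases h' : ξ = b
      · subst h'; simp
      · have : ¬ a = b + (a - ξ) := by
          intro h2
          apply h'
          have h3 : b + (a - ξ) = a + (b - ξ) := by abel
          rw [h3, left_eq_add, sub_eq_zero] at h2
          exact h2.symm
        simp [h', this]
    · simp [h, Ne.symm h]
  rw [this]
  exact S.smul_mem (S.mul_mem ((hD _).1 (hdiag η)) (hPM _)) _
end

section
/- One has det(C)² = (−1)^{(r−1)/2}·r^r in 𝔽, and (λ·C)² = (−1)^{(r−1)/2}·σ, where σ is the permutation matrix with (i,j)-entry 1 exactly when i = −j. -/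
theorem sign_neg_zmod {r : ℕ} [Fact (Nat.Prime r)] (hr : Odd r) :
    Equiv.Perm.sign (Equiv.neg (ZMod r)) = (-1) ^ ((r - 1) / 2) := by
  classical
  set p : Equiv.Perm (ZMod r) := Equiv.neg (ZMod r) with hp
  have h2 : p ^ 2 = 1 := by
    ext x; simp [hp, pow_two]
  have hc := (Equiv.Perm.pow_prime_eq_one_iff (σ := p) (p := 2)).1 h2
  have hrep := Multiset.eq_replicate_card.2 hc
  have hs : p.support = Finset.univ.erase 0 := by
    ext x
    have : -x = x ↔ x = 0 := ZMod.neg_eq_self_iff x |>.trans (by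
      constructor
      · rintro (h | h)
        · exact h
        · obtain ⟨k, hk⟩ := hr
          omega
      · exact Or.inl)
    simp [hp, Equiv.Perm.mem_support, this]
  have hcard : p.support.card = r - 1 := by
    rw [hs, Finset.card_erase_of_mem (Finset.mem_univ _), Finset.card_univ, ZMod.card]
  have hsum := Equiv.Perm.sum_cycleType p
  rw [hcard] at hsum
  have hm : p.cycleType.card * 2 = r - 1 := by
    rw [← hsum]; conv_rhs => rw [hrep]
    simp
  rw [Equiv.Perm.sign_of_cycleType, hsum, ← hm, Nat.mul_div_cancel _ (by norm_num), pow_add,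
    pow_mul']
  simp

/-- `det(C)² = (−1)^((r−1)/2)·r^r` and `(λC)² = (−1)^((r−1)/2)·σ`. -/
theorem weil_detC_sq_and_lamC_sq
    {r : ℕ} [Fact (Nat.Prime r)] (hr : Odd r)
    {𝔽 : Type*} [Field 𝔽] {θ : 𝔽} (hθ : IsPrimitiveRoot θ r)
    (C : Matrix (ZMod r) (ZMod r) 𝔽)
    (hC : ∀ i j : ZMod r, C i j = θ ^ (i * j).val)
    (lam : 𝔽) (hlam : lam = (-(r : 𝔽)) ^ ((r - 1) / 2) * C.det⁻¹)
    (σ : Matrix (ZMod r) (ZMod r) 𝔽)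
    (hσ : ∀ i j : ZMod r, σ i j = if i = -j then 1 else 0) :
    C.det ^ 2 = (-1 : 𝔽) ^ ((r - 1) / 2) * (r : 𝔽) ^ r ∧
      (lam • C) * (lam • C) = ((-1 : 𝔽) ^ ((r - 1) / 2)) • σ := by
  classical
  have hr0 : (r : 𝔽) ≠ 0 := by
    have : NeZero r := ⟨(Fact.out : r.Prime).ne_zero⟩
    exact hθ.neZero'.out
  set e : 𝔽 := (-1 : 𝔽) ^ ((r - 1) / 2) with he
  have he2 : e * e = 1 := by rw [he, ← mul_pow]; simp
  have hr1 : (r - 1) / 2 * 2 + 1 = r := by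
    obtain ⟨k, hk⟩ := hr
    omega
  have hCC : C * C = (r : 𝔽) • σ := by
    ext i j
    have hψ := AddChar.zmodChar_primitive_of_primitive_root r hθ
    have := AddChar.sum_mulShift (i + j) hψ
    rw [Matrix.mul_apply, Matrix.smul_apply, hσ]
    simp only [hC]
    have h3 : ∀ k : ZMod r, θ ^ (i * k).val * θ ^ (k * j).val =
        AddChar.zmodChar r hθ.pow_eq_one (k * (i + j)) := by
      intro k
      rw [mul_add, AddChar.map_add_eq_mul, AddChar.zmodChar_apply, AddChar.zmodChar_apply,
        mul_comm i k]
    simp only [h3]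
    rw [this, ZMod.card]
    simp [eq_neg_iff_add_eq_zero]
  have hσdet : σ.det = e := by
    have : σ = Equiv.Perm.permMatrix 𝔽 (Equiv.neg (ZMod r)) := by
      ext i j
      rw [hσ]
      simp [Equiv.Perm.permMatrix, PEquiv.toMatrix_apply, neg_eq_iff_eq_neg]
    rw [this, Matrix.det_permutation, sign_neg_zmod hr]
    simp [he]
  have hdet : C.det ^ 2 = e * (r : 𝔽) ^ r := by
    rw [pow_two, ← Matrix.det_mul, hCC, Matrix.det_smul, hσdet, ZMod.card, mul_comm]
  refine ⟨hdet, ?_⟩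
  have hl : lam * lam * r = e := by
    have h4 : lam * lam = (e * (r : 𝔽) ^ ((r - 1) / 2)) ^ 2 * (C.det ^ 2)⁻¹ := by
      rw [hlam, neg_pow, ← he, ← inv_pow]; ring
    have h5 : (r : 𝔽) ^ r = ((r : 𝔽) ^ ((r - 1) / 2)) ^ 2 * r := by
      rw [← pow_mul, ← pow_succ, hr1]
    have he0 : e ≠ 0 := fun h => by simp [h] at he2
    rw [h4, hdet, h5]
    field_simp
  rw [Matrix.smul_mul, Matrix.mul_smul, hCC, smul_smul, smul_smul, hl]
end

section
/- The trace of U satisfies Tr(U)² = (−1)^{(r−1)/2}·r in 𝔽; equivalently, (∑_{ξ ∈ ZMod r} θ^{ξ.val·(ξ.val+r)/2})² = (−1)^{(r−1)/2}·r. -/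
open Finset in
theorem aux_card_sum {r : ℕ} [Fact (Nat.Prime r)] (hr2 : ringChar (ZMod r) ≠ 2)
    {𝔽 : Type*} [Field 𝔽] (ψ : AddChar (ZMod r) 𝔽) (hψ : ψ ≠ 1) :
    ∑ x : ZMod r, ψ (x ^ 2) = ∑ a : ZMod r, ((quadraticChar (ZMod r) a : ℤ) : 𝔽) * ψ a := by
  have h1 : ∑ x : ZMod r, ψ (x ^ 2)
      = ∑ a : ZMod r, ∑ x ∈ univ.filter (fun x : ZMod r => x ^ 2 = a), ψ (x ^ 2) :=
    (Finset.sum_fiberwise univ (fun x : ZMod r => x ^ 2) (fun x => ψ (x ^ 2))).symm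
  have h0 : ∑ a : ZMod r, ψ a = 0 := AddChar.sum_eq_zero_of_ne_one hψ
  rw [h1]
  have h2 : ∀ a : ZMod r, ∑ x ∈ univ.filter (fun x : ZMod r => x ^ 2 = a), ψ (x ^ 2)
      = ((quadraticChar (ZMod r) a : ℤ) : 𝔽) * ψ a + ψ a := by
    intro a
    have h3 := quadraticChar_card_sqrts hr2 a
    have h4 : ({x : ZMod r | x ^ 2 = a}).toFinset = univ.filter (fun x : ZMod r => x ^ 2 = a) := by
      ext x; simp
    rw [h4] at h3
    rw [Finset.sum_congr rfl (g := fun _ => ψ a)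
      (fun x hx => by rw [(Finset.mem_filter.mp hx).2]), Finset.sum_const, nsmul_eq_mul]
    have h5 := congrArg (fun z : ℤ => (z : 𝔽)) h3
    push_cast at h5
    rw [h5]; ring
  simp_rw [h2]
  rw [Finset.sum_add_distrib, h0, add_zero]

/-- `Tr(U)² = (−1)^((r−1)/2)·r`. -/
theorem weil_traceU_sq
    {r : ℕ} [Fact (Nat.Prime r)] (hr : Odd r)
    {𝔽 : Type*} [Field 𝔽] {θ : 𝔽} (hθ : IsPrimitiveRoot θ r)
    (U : Matrix (ZMod r) (ZMod r) 𝔽)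
    (hU : U = Matrix.diagonal fun ξ : ZMod r => θ ^ (ξ.val * (ξ.val + r) / 2)) :
    U.trace ^ 2 = (-1 : 𝔽) ^ ((r - 1) / 2) * (r : 𝔽) ∧
      (∑ ξ : ZMod r, θ ^ (ξ.val * (ξ.val + r) / 2)) ^ 2
        = (-1 : 𝔽) ^ ((r - 1) / 2) * (r : 𝔽) := by
  have key : (∑ ξ : ZMod r, θ ^ (ξ.val * (ξ.val + r) / 2)) ^ 2
        = (-1 : 𝔽) ^ ((r - 1) / 2) * (r : 𝔽) := by
    have hrc : ringChar (ZMod r) ≠ 2 := by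
      rw [ZMod.ringChar_zmod_n]; rintro rfl; revert hr; decide
    have h2 : (2 : ZMod r) ≠ 0 := Ring.two_ne_zero hrc
    obtain ⟨ψ0, hψ0⟩ : ∃ ψ0, ψ0 = AddChar.zmodChar r hθ.pow_eq_one := ⟨_, rfl⟩
    have hp0 : ψ0.IsPrimitive := by
      rw [hψ0]; exact AddChar.zmodChar_primitive_of_primitive_root r hθ
    have hne0 : ∀ c : ZMod r, c ≠ 0 → ψ0.mulShift c ≠ 1 := fun c hc => hp0 hc
    obtain ⟨ψ, hψ⟩ : ∃ ψ, ψ = ψ0.mulShift (2⁻¹) := ⟨_, rfl⟩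
    have hne : ψ ≠ 1 := hψ ▸ hne0 _ (inv_ne_zero h2)
    have hp : ψ.IsPrimitive := AddChar.IsPrimitive.of_ne_one hne
    have hne' : ψ.mulShift (-1) ≠ 1 := hp (neg_ne_zero.mpr one_ne_zero)
    have hS : ∑ ξ : ZMod r, θ ^ (ξ.val * (ξ.val + r) / 2) = ∑ x : ZMod r, ψ (x ^ 2) := by
      refine Finset.sum_congr rfl fun ξ _ => ?_
      rw [hψ, AddChar.mulShift_apply, hψ0, ← AddChar.zmodChar_apply' hθ.pow_eq_one]
      congr 1
      have hd : 2 ∣ ξ.val * (ξ.val + r) := by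
        rcases Nat.even_or_odd ξ.val with h | h
        · exact (h.two_dvd).mul_right _
        · exact ((h.add_odd hr).two_dvd).mul_left _
      have h3 : ((2 * (ξ.val * (ξ.val + r) / 2) : ℕ) : ZMod r) = ξ ^ 2 := by
        rw [Nat.mul_div_cancel' hd]; simp [sq]
      rw [← h3]; push_cast
      rw [inv_mul_cancel_left₀ h2]
    -- product with the conjugate
    have hprod : (∑ x : ZMod r, ψ (x ^ 2)) * (∑ y : ZMod r, ψ (-1 * y ^ 2)) = r := by
      rw [Finset.sum_mul_sum, Finset.sum_comm]
      have e1 : ∀ y : ZMod r, ∑ x : ZMod r, ψ (x ^ 2) * ψ (-1 * y ^ 2)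
          = ∑ u : ZMod r, ψ (u ^ 2) * ψ (y * (2 * u)) := by
        intro y
        rw [← Equiv.sum_comp (Equiv.addRight y)]
        refine Finset.sum_congr rfl fun u _ => ?_
        rw [← AddChar.map_add_eq_mul, ← AddChar.map_add_eq_mul]
        congr 1
        simp only [Equiv.coe_addRight]; ring
      simp_rw [e1]
      rw [Finset.sum_comm]
      simp_rw [← Finset.mul_sum, AddChar.sum_mulShift _ hp]
      simp [h2, ZMod.card]
    have hconj : ∑ y : ZMod r, ψ (-1 * y ^ 2)
        = (-1 : 𝔽) ^ ((r - 1) / 2) * ∑ x : ZMod r, ψ (x ^ 2) := by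
      have a1 := aux_card_sum hrc (ψ.mulShift (-1)) hne'
      simp only [AddChar.mulShift_apply] at a1
      rw [a1, aux_card_sum hrc ψ hne, ← Equiv.sum_comp (Equiv.neg (ZMod r)), Finset.mul_sum]
      refine Finset.sum_congr rfl fun a _ => ?_
      have a2 : quadraticChar (ZMod r) (-1) = (-1) ^ ((r - 1) / 2) := by
        have hm : r / 2 = (r - 1) / 2 := by obtain ⟨k, rfl⟩ := hr; omega
        rw [quadraticChar_neg_one hrc, ZMod.card, ZMod.χ₄_eq_neg_one_pow (Nat.odd_iff.mp hr), hm]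
      rw [Equiv.neg_apply, ← neg_one_mul a, map_mul, a2]
      push_cast
      rw [show (-1 : ZMod r) * (-1 * a) = a by ring]
      ring
    rw [hS]
    rw [hconj] at hprod
    have hs : ((-1 : 𝔽) ^ ((r - 1) / 2)) * ((-1 : 𝔽) ^ ((r - 1) / 2)) = 1 := by
      rw [← mul_pow]; simp
    rw [← hprod]
    linear_combination (-(∑ x : ZMod r, ψ (x ^ 2)) ^ 2) * hs
  refine ⟨?_, key⟩
  rw [hU, Matrix.trace_diagonal]
  exact key
end

section
/- The matrix σ satisfies σ·σ = 1, and σ normalizes R acting by inversion modulo the center: σ·A_t·σ·A_t = 1 and σ·B_t·σ·B_t = 1 for all 1 ≤ t ≤ ℓ, and consequently for every x ∈ R the element σ·x·σ lies in R and σ·x·σ·x lies in the subgroup generated by the scalar unit θ·I. -/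
/-- `σ² = 1`, `σ` inverts the generators `A_t, B_t` of `R` modulo the center, and hence
for every `x ∈ R` we have `σxσ ∈ R` and `σxσx ∈ ⟨θ·I⟩`. -/
theorem weil_sigma_inverts_R
    {r : ℕ} [Fact (Nat.Prime r)] (hr : Odd r)
    {𝔽 : Type*} [Field 𝔽] {θ : 𝔽} (hθ : IsPrimitiveRoot θ r)
    {ℓ : ℕ} (hℓ : 1 ≤ ℓ)
    (uA uB : Fin ℓ → (Matrix (Fin ℓ → ZMod r) (Fin ℓ → ZMod r) 𝔽)ˣ)
    (huA : ∀ t, (uA t : Matrix (Fin ℓ → ZMod r) (Fin ℓ → ZMod r) 𝔽)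
      = Matrix.diagonal fun ξ => θ ^ (ξ t).val)
    (huB : ∀ t η ξ, (uB t : Matrix (Fin ℓ → ZMod r) (Fin ℓ → ZMod r) 𝔽) η ξ
      = if η t = ξ t + 1 ∧ ∀ i, i ≠ t → η i = ξ i then 1 else 0)
    (σ : (Matrix (Fin ℓ → ZMod r) (Fin ℓ → ZMod r) 𝔽)ˣ)
    (hσ : ∀ η ξ, (σ : Matrix (Fin ℓ → ZMod r) (Fin ℓ → ZMod r) 𝔽) η ξ
      = if η = -ξ then 1 else 0)
    (θI : (Matrix (Fin ℓ → ZMod r) (Fin ℓ → ZMod r) 𝔽)ˣ)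
    (hθI : (θI : Matrix (Fin ℓ → ZMod r) (Fin ℓ → ZMod r) 𝔽) = θ • 1)
    (R : Subgroup (Matrix (Fin ℓ → ZMod r) (Fin ℓ → ZMod r) 𝔽)ˣ)
    (hR : R = Subgroup.closure (Set.range uA ∪ Set.range uB)) :
    σ * σ = 1 ∧
      (∀ t, σ * uA t * σ * uA t = 1) ∧
      (∀ t, σ * uB t * σ * uB t = 1) ∧
      ∀ x ∈ R, σ * x * σ ∈ R ∧ σ * x * σ * x ∈ Subgroup.closure {θI} := by
  classical
  have hrp : r.Prime := Fact.out
  have : Fact (1 < r) := ⟨hrp.one_lt⟩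
  -- the character `a ↦ θ ^ a.val`
  have hχ : ∀ a b : ZMod r, θ ^ (a + b).val = θ ^ a.val * θ ^ b.val := by
    intro a b
    rw [ZMod.val_add, ← pow_add]
    exact (pow_eq_pow_mod _ hθ.pow_eq_one).symm
  have hχ1 : θ ^ (1 : ZMod r).val = θ := by rw [ZMod.val_one, pow_one]
  -- row actions
  have aA : ∀ t (M : Matrix (Fin ℓ → ZMod r) (Fin ℓ → ZMod r) 𝔽) η ξ,
      ((uA t : Matrix (Fin ℓ → ZMod r) (Fin ℓ → ZMod r) 𝔽) * M) η ξ
        = θ ^ (η t).val * M η ξ := by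
    intro t M η ξ
    rw [huA, Matrix.diagonal_mul]
  have aS : ∀ (M : Matrix (Fin ℓ → ZMod r) (Fin ℓ → ZMod r) 𝔽) η ξ,
      ((σ : Matrix (Fin ℓ → ZMod r) (Fin ℓ → ZMod r) 𝔽) * M) η ξ = M (-η) ξ := by
    intro M η ξ
    rw [Matrix.mul_apply, Finset.sum_eq_single (-η)]
    · simp [hσ]
    · intro b _ hb
      rw [hσ, if_neg, zero_mul]
      rintro rfl
      simp at hb
    · simp
  have aB : ∀ t (M : Matrix (Fin ℓ → ZMod r) (Fin ℓ → ZMod r) 𝔽) η ξ,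
      ((uB t : Matrix (Fin ℓ → ZMod r) (Fin ℓ → ZMod r) 𝔽) * M) η ξ
        = M (η - Pi.single t 1) ξ := by
    intro t M η ξ
    rw [Matrix.mul_apply, Finset.sum_eq_single (η - Pi.single t 1)]
    · rw [huB, if_pos, one_mul]
      refine ⟨by simp, fun i hi => by simp [Pi.single_eq_of_ne hi]⟩
    · intro b _ hb
      rw [huB, if_neg, zero_mul]
      rintro ⟨h1, h2⟩
      apply hb
      funext i
      by_cases hi : i = t
      · subst hi; simp [h1]
      · simp [Pi.single_eq_of_ne hi, h2 i hi]
    · simp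
  have ext1 : ∀ x y : (Matrix (Fin ℓ → ZMod r) (Fin ℓ → ZMod r) 𝔽)ˣ,
      (∀ η ξ, ((x : Matrix (Fin ℓ → ZMod r) (Fin ℓ → ZMod r) 𝔽) * (1 : Matrix (Fin ℓ → ZMod r) (Fin ℓ → ZMod r) 𝔽)) η ξ
        = ((y : Matrix (Fin ℓ → ZMod r) (Fin ℓ → ZMod r) 𝔽) * (1 : Matrix (Fin ℓ → ZMod r) (Fin ℓ → ZMod r) 𝔽)) η ξ) → x = y := by
    intro x y h
    apply Units.ext
    have := Matrix.ext h
    simpa using this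
  have aT : ∀ (M : Matrix (Fin ℓ → ZMod r) (Fin ℓ → ZMod r) 𝔽) η ξ,
      ((θI : Matrix (Fin ℓ → ZMod r) (Fin ℓ → ZMod r) 𝔽) * M) η ξ = θ * M η ξ := by
    intro M η ξ
    rw [hθI]; simp
  have hσσ : σ * σ = 1 := by
    apply ext1; intro η ξ
    simp only [Units.val_mul, mul_assoc, aS, Units.val_one, one_mul]
    rw [neg_neg]
  have hA : ∀ t, σ * uA t * σ * uA t = 1 := by
    intro t
    apply ext1; intro η ξ
    simp only [Units.val_mul, mul_assoc, aS, aA, neg_neg, Units.val_one, one_mul]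
    rw [← mul_assoc, ← hχ]; simp
  have hB : ∀ t, σ * uB t * σ * uB t = 1 := by
    intro t
    apply ext1; intro η ξ
    simp only [Units.val_mul, mul_assoc, aS, aB, Units.val_one, one_mul]
    refine congrArg (fun v => (1 : Matrix (Fin ℓ → ZMod r) (Fin ℓ → ZMod r) 𝔽) v ξ) ?_
    abel
  refine ⟨hσσ, hA, hB, ?_⟩
  have hcent : ∀ g, θI * g = g * θI := by
    intro g
    apply Units.ext
    simp [hθI]
  set Z := Subgroup.closure {θI} with hZ
  have hZn : Z.Normal := by
    have hle : Z ≤ Subgroup.center _ := by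
      rw [hZ, Subgroup.closure_le]
      rintro _ rfl
      exact Subgroup.mem_center_iff.2 fun g => (hcent g).symm
    exact ⟨fun n hn g => by
      rw [Subgroup.mem_center_iff.1 (hle hn) g, mul_inv_cancel_right]; exact hn⟩
  let q := QuotientGroup.mk' Z
  have qθ : q θI = 1 := (QuotientGroup.eq_one_iff θI).2 (Subgroup.subset_closure rfl)
  have cAA : ∀ t s, uA t * uA s = uA s * uA t := by
    intro t s
    apply ext1; intro η ξ
    simp only [Units.val_mul, mul_assoc, aA]
    ring
  have cBB : ∀ t s, uB t * uB s = uB s * uB t := by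
    intro t s
    apply ext1; intro η ξ
    simp only [Units.val_mul, mul_assoc, aB]
    refine congrArg (fun v => (1 : Matrix (Fin ℓ → ZMod r) (Fin ℓ → ZMod r) 𝔽) v ξ) ?_
    abel
  have cAB : ∀ t s, q (uA t) * q (uB s) = q (uB s) * q (uA t) := by
    intro t s
    by_cases h : t = s
    · subst h
      have h1 : uA t * uB t = θI * (uB t * uA t) := by
        apply ext1; intro η ξ
        simp only [Units.val_mul, mul_assoc, aA, aB, aT]
        have := hχ (η t - 1) 1
        rw [sub_add_cancel, hχ1] at this
        simp only [Pi.sub_apply, Pi.single_eq_same]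
        rw [this]; ring
      rw [← map_mul, h1, map_mul, qθ, one_mul, map_mul]
    · have h1 : uA t * uB s = uB s * uA t := by
        apply ext1; intro η ξ
        simp only [Units.val_mul, mul_assoc, aA, aB]
        simp [Pi.single_eq_of_ne h]
      rw [← map_mul, h1, map_mul]
  have cgen : ∀ x ∈ Set.range uA ∪ Set.range uB, ∀ y ∈ Set.range uA ∪ Set.range uB,
      Commute (q x) (q y) := by
    rintro _ (⟨t, rfl⟩ | ⟨t, rfl⟩) _ (⟨s, rfl⟩ | ⟨s, rfl⟩)
    · exact (show Commute _ _ from cAA t s).map q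
    · exact cAB t s
    · exact (show Commute _ _ from cAB s t).symm
    · exact (show Commute _ _ from cBB t s).map q
  have cR1 : ∀ x ∈ Set.range uA ∪ Set.range uB, ∀ y ∈ R, Commute (q x) (q y) := by
    intro x hx y hy
    rw [hR] at hy
    induction hy using Subgroup.closure_induction with
    | mem y hy => exact cgen x hx y hy
    | one => rw [map_one]; exact Commute.one_right _
    | mul a b _ _ ha hb => rw [map_mul]; exact ha.mul_right hb
    | inv a _ ha => rw [map_inv]; exact ha.inv_right
  have cR : ∀ x ∈ R, ∀ y ∈ R, Commute (q x) (q y) := by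
    intro x hx y hy
    rw [hR] at hx
    induction hx using Subgroup.closure_induction with
    | mem x hx => exact cR1 x hx y hy
    | one => rw [map_one]; exact Commute.one_left _
    | mul a b _ _ ha hb => rw [map_mul]; exact ha.mul_left hb
    | inv a _ ha => rw [map_inv]; exact ha.inv_left
  have hmul : ∀ a b, σ * (a * b) * σ = (σ * a * σ) * (σ * b * σ) := by
    intro a b
    calc σ * (a * b) * σ = σ * a * 1 * b * σ := by group
      _ = _ := by rw [← hσσ]; group
  have hinv : ∀ a, σ * a⁻¹ * σ = (σ * a * σ)⁻¹ := by
    intro a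
    rw [eq_inv_iff_mul_eq_one, ← hmul]; simp [hσσ]
  have hgen : ∀ x ∈ Set.range uA ∪ Set.range uB, σ * x * σ = x⁻¹ := by
    rintro _ (⟨t, rfl⟩ | ⟨t, rfl⟩)
    · exact eq_inv_of_mul_eq_one_left (hA t)
    · exact eq_inv_of_mul_eq_one_left (hB t)
  have key : ∀ x ∈ R, σ * x * σ ∈ R ∧ q (σ * x * σ) = (q x)⁻¹ := by
    intro x hx
    have hx' := hx
    rw [hR] at hx'
    clear hx
    induction hx' using Subgroup.closure_induction with
    | mem x hx =>
      rw [hgen x hx, map_inv]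
      exact ⟨R.inv_mem (by rw [hR]; exact Subgroup.subset_closure hx), rfl⟩
    | one => rw [mul_one, hσσ]; simp [R.one_mem]
    | mul a b ha hb iha ihb =>
      rw [hmul]
      refine ⟨R.mul_mem iha.1 ihb.1, ?_⟩
      rw [map_mul, iha.2, ihb.2, map_mul,
        (cR a (by rw [hR]; exact ha) b (by rw [hR]; exact hb)).eq, mul_inv_rev]
    | inv a ha iha =>
      rw [hinv]
      refine ⟨R.inv_mem iha.1, ?_⟩
      rw [map_inv, iha.2, map_inv]
  intro x hx
  refine ⟨(key x hx).1, ?_⟩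
  refine (QuotientGroup.eq_one_iff _).1 (?_ : q (σ * x * σ * x) = 1)
  rw [map_mul, (key x hx).2, inv_mul_cancel]
end

section
/- The centralizer of σ in R is exactly the subgroup generated by the scalar unit θ·I: an element x ∈ R satisfies x·σ = σ·x if and only if x = θ^k·I for some k. -/
namespace WeilAux

/-- The additive character `n ↦ θ ^ n.val`. -/
def chi (r : ℕ) {𝔽 : Type*} [Field 𝔽] (θ : 𝔽) (n : ZMod r) : 𝔽 := θ ^ n.val

lemma chi_add {r : ℕ} [Fact (Nat.Prime r)] {𝔽 : Type*} [Field 𝔽] {θ : 𝔽}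
    (hθ : IsPrimitiveRoot θ r) (m n : ZMod r) : chi r θ (m + n) = chi r θ m * chi r θ n := by
  unfold chi
  rw [ZMod.val_add, ← pow_add, ← pow_eq_pow_mod _ hθ.pow_eq_one]

lemma chi_inj {r : ℕ} [Fact (Nat.Prime r)] {𝔽 : Type*} [Field 𝔽] {θ : 𝔽}
    (hθ : IsPrimitiveRoot θ r) {m n : ZMod r} (h : chi r θ m = chi r θ n) : m = n :=
  ZMod.val_injective r (hθ.pow_inj (ZMod.val_lt m) (ZMod.val_lt n) h)

lemma chi_zero {r : ℕ} {𝔽 : Type*} [Field 𝔽] (θ : 𝔽) : chi r θ 0 = 1 := by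
  simp [chi]

lemma chi_ne {r : ℕ} [Fact (Nat.Prime r)] {𝔽 : Type*} [Field 𝔽] {θ : 𝔽}
    (hθ : IsPrimitiveRoot θ r) (m : ZMod r) : chi r θ m ≠ 0 :=
  pow_ne_zero _ (hθ.ne_zero (Fact.out : Nat.Prime r).ne_zero)

/-- General element of the extraspecial group. -/
def M {r : ℕ} {𝔽 : Type*} [Field 𝔽] (θ : 𝔽) {ℓ : ℕ} (a b : Fin ℓ → ZMod r) (c : ZMod r) :
    Matrix (Fin ℓ → ZMod r) (Fin ℓ → ZMod r) 𝔽 :=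
  fun η ξ => if η = ξ + b then chi r θ (c + a ⬝ᵥ ξ) else 0

lemma M_mul {r : ℕ} [Fact (Nat.Prime r)] {𝔽 : Type*} [Field 𝔽] {θ : 𝔽}
    (hθ : IsPrimitiveRoot θ r) {ℓ : ℕ} (a b a' b' : Fin ℓ → ZMod r) (c c' : ZMod r) :
    M θ a b c * M θ a' b' c' = M θ (a + a') (b + b') (c + c' + a ⬝ᵥ b') := by
  ext η ξ
  rw [Matrix.mul_apply, Finset.sum_eq_single (ξ + b')]
  · have e : ξ + b' + b = ξ + (b + b') := by abel
    simp only [M, e, if_true]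
    split_ifs
    · rw [← chi_add hθ]
      congr 1
      rw [dotProduct_add, add_dotProduct]
      ring
    · simp
  · intro ζ _ h
    simp [M, h]
  · simp

lemma M_zero {r : ℕ} {𝔽 : Type*} [Field 𝔽] (θ : 𝔽) {ℓ : ℕ} (c : ZMod r) :
    M θ (0 : Fin ℓ → ZMod r) 0 c = chi r θ c • 1 := by
  ext η ξ
  simp [M, Matrix.one_apply]

end WeilAux

open WeilAux in

/-- The centralizer of `σ` in `R` is exactly `⟨θ·I⟩`. -/
theorem weil_centralizer_sigma
    {r : ℕ} [Fact (Nat.Prime r)] (hr : Odd r)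
    {𝔽 : Type*} [Field 𝔽] {θ : 𝔽} (hθ : IsPrimitiveRoot θ r)
    {ℓ : ℕ} (hℓ : 1 ≤ ℓ)
    (uA uB : Fin ℓ → (Matrix (Fin ℓ → ZMod r) (Fin ℓ → ZMod r) 𝔽)ˣ)
    (huA : ∀ t, (uA t : Matrix (Fin ℓ → ZMod r) (Fin ℓ → ZMod r) 𝔽)
      = Matrix.diagonal fun ξ => θ ^ (ξ t).val)
    (huB : ∀ t η ξ, (uB t : Matrix (Fin ℓ → ZMod r) (Fin ℓ → ZMod r) 𝔽) η ξ
      = if η t = ξ t + 1 ∧ ∀ i, i ≠ t → η i = ξ i then 1 else 0)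
    (σ : (Matrix (Fin ℓ → ZMod r) (Fin ℓ → ZMod r) 𝔽)ˣ)
    (hσ : ∀ η ξ, (σ : Matrix (Fin ℓ → ZMod r) (Fin ℓ → ZMod r) 𝔽) η ξ
      = if η = -ξ then 1 else 0)
    (R : Subgroup (Matrix (Fin ℓ → ZMod r) (Fin ℓ → ZMod r) 𝔽)ˣ)
    (hR : R = Subgroup.closure (Set.range uA ∪ Set.range uB)) :
    ∀ x ∈ R, (x * σ = σ * x ↔
      ∃ k : ℕ, (x : Matrix (Fin ℓ → ZMod r) (Fin ℓ → ZMod r) 𝔽) = θ ^ k • 1) := by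
  intro x hx
  have key : ∃ a b c, (x : Matrix (Fin ℓ → ZMod r) (Fin ℓ → ZMod r) 𝔽) = M θ a b c := by
    rw [hR] at hx
    induction hx using Subgroup.closure_induction with
    | mem x hx =>
      rcases hx with ⟨t, rfl⟩ | ⟨t, rfl⟩
      · refine ⟨Pi.single t 1, 0, 0, ?_⟩
        rw [huA]
        ext η ξ
        by_cases h : η = ξ
        · subst h
          simp [M, chi]
        · simp [M, h]
      · refine ⟨0, Pi.single t 1, 0, ?_⟩
        ext η ξ
        rw [huB]
        have : (η t = ξ t + 1 ∧ ∀ i, i ≠ t → η i = ξ i) ↔ η = ξ + Pi.single t 1 := by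
          constructor
          · rintro ⟨h1, h2⟩
            ext i
            by_cases hi : i = t
            · subst hi
              simp [h1]
            · simp [hi, h2 i hi]
          · rintro rfl
            refine ⟨by simp, fun i hi => by simp [hi]⟩
        simp only [this, M, zero_dotProduct, add_zero, chi_zero]
    | one => exact ⟨0, 0, 0, by simp [M_zero, chi_zero]⟩
    | mul x y _ _ hx hy =>
      obtain ⟨a, b, c, h⟩ := hx
      obtain ⟨a', b', c', h'⟩ := hy
      exact ⟨_, _, _, by rw [Units.val_mul, h, h', M_mul hθ]⟩
    | inv x _ hx =>
      obtain ⟨a, b, c, h⟩ := hx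
      refine ⟨-a, -b, -c + a ⬝ᵥ b, ?_⟩
      apply Units.inv_eq_of_mul_eq_one_right
      rw [h, M_mul hθ]
      have e : c + (-c + a ⬝ᵥ b) + a ⬝ᵥ (-b) = 0 := by
        rw [dotProduct_neg]
        ring
      rw [e, add_neg_cancel, add_neg_cancel, M_zero, chi_zero, one_smul]
  have hr2 : r ≠ 2 := by
    rintro rfl
    exact absurd hr (by decide)
  have hneg : ∀ z : ZMod r, -z = z → z = 0 := by
    intro z hz
    have : Fact (2 < r) := ⟨lt_of_le_of_ne (Fact.out : Nat.Prime r).two_le (Ne.symm hr2)⟩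
    by_contra h0
    exact ZMod.ne_neg_self hr h0 hz.symm
  obtain ⟨a, b, c, h⟩ := key
  constructor
  · intro hc
    have hc' : ∀ η ξ, M θ a b c η (-ξ) = M θ a b c (-η) ξ := by
      intro η ξ
      have := congrArg (fun u : (Matrix (Fin ℓ → ZMod r) (Fin ℓ → ZMod r) 𝔽)ˣ =>
        (u : Matrix (Fin ℓ → ZMod r) (Fin ℓ → ZMod r) 𝔽) η ξ) hc
      simp only [Units.val_mul, h, Matrix.mul_apply, hσ] at this
      rw [Finset.sum_eq_single (-ξ) (fun ζ _ hz => by simp [hz]) (by simp),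
        Finset.sum_eq_single (-η) (fun ζ _ hz => by
          have : η ≠ -ζ := by
            rintro rfl
            simp at hz
          simp [this]) (by simp)] at this
      simpa using this
    have hb : b = 0 := by
      have h0 := hc' b 0
      by_cases hb : -b = b
      · ext i
        exact hneg _ (congrFun hb i)
      · simp [M, hb, chi_ne hθ] at h0
    subst hb
    have ha : a = 0 := by
      ext i
      have h0 := hc' (-Pi.single i 1) (Pi.single i 1)
      simp only [M, add_zero, neg_neg, if_true] at h0
      have h1 := add_left_cancel (chi_inj hθ h0)
      simp only [dotProduct_neg, dotProduct_single, mul_one] at h1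
      exact hneg _ h1
    subst ha
    exact ⟨c.val, by rw [h, M_zero, chi]⟩
  · rintro ⟨k, hk⟩
    ext1
    simp [hk]
end

section
/- Every element of G commutes with σ: for all g ∈ G, g·σ = σ·g. In particular σ commutes with each generator λ·C_t, U_t (1 ≤ t ≤ ℓ) and D_{st} (1 ≤ s < t ≤ ℓ). -/
theorem weil_aux_comm {α 𝔽 : Type*} [Fintype α] [DecidableEq α] [InvolutiveNeg α] [Field 𝔽]
    (M S : (Matrix α α 𝔽)ˣ)
    (hS : ∀ η ξ, (S : Matrix α α 𝔽) η ξ = if η = -ξ then 1 else 0)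
    (hM : ∀ η ξ, (M : Matrix α α 𝔽) η (-ξ) = (M : Matrix α α 𝔽) (-η) ξ) :
    M * S = S * M := by
  apply Units.ext
  ext η ξ
  have h : ∀ k, (η = -k) = (k = -η) := fun k => propext ⟨fun h => by simp [h], fun h => by simp [h]⟩
  simp [Matrix.mul_apply, hS, hM, h]

theorem weil_aux_exp {r : ℕ} [NeZero r] {𝔽 : Type*} [Field 𝔽] {θ : 𝔽} (hθ : θ ^ r = 1)
    (a : ZMod r) :
    θ ^ ((-a).val * ((-a).val + r) / 2) = θ ^ (a.val * (a.val + r) / 2) := by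
  by_cases ha : a = 0
  · simp [ha]
  have hw : (-a).val + a.val = r := by
    have : NeZero a := ⟨ha⟩
    rw [ZMod.val_neg_of_ne_zero]
    have := a.val_lt
    omega
  generalize (-a).val = w at *
  generalize a.val = v at *
  have h1 : w * (w + r) + 4 * (r * v) = v * (v + r) + 2 * (r * r) := by
    subst hw; ring
  have h2 : w * (w + r) / 2 + r * (2 * v) = v * (v + r) / 2 + r * r := by
    have : r * (2 * v) = 2 * (r * v) := by ring
    omega
  have h3 := congrArg (fun n => θ ^ n) h2
  simpa [pow_add, pow_mul, hθ] using h3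

/-- Every element of `G` commutes with `σ`; in particular so does each generator. -/
theorem weil_G_centralizes_sigma
    {r : ℕ} [Fact (Nat.Prime r)] (hr : Odd r)
    {𝔽 : Type*} [Field 𝔽] {θ : 𝔽} (hθ : IsPrimitiveRoot θ r)
    {ℓ : ℕ} (hℓ : 1 ≤ ℓ)
    (Cb : Matrix (ZMod r) (ZMod r) 𝔽)
    (hCb : ∀ i j : ZMod r, Cb i j = θ ^ (i * j).val)
    (lam : 𝔽) (hlam : lam = (-(r : 𝔽)) ^ ((r - 1) / 2) * Cb.det⁻¹)
    (uC uU : Fin ℓ → (Matrix (Fin ℓ → ZMod r) (Fin ℓ → ZMod r) 𝔽)ˣ)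
    (uD : Fin ℓ → Fin ℓ → (Matrix (Fin ℓ → ZMod r) (Fin ℓ → ZMod r) 𝔽)ˣ)
    (huC : ∀ t, (uC t : Matrix (Fin ℓ → ZMod r) (Fin ℓ → ZMod r) 𝔽)
      = lam • Matrix.of fun η ξ =>
          if ∀ i, i ≠ t → η i = ξ i then θ ^ (η t * ξ t).val else 0)
    (huU : ∀ t, (uU t : Matrix (Fin ℓ → ZMod r) (Fin ℓ → ZMod r) 𝔽)
      = Matrix.diagonal fun ξ => θ ^ ((ξ t).val * ((ξ t).val + r) / 2))
    (huD : ∀ s t : Fin ℓ, s < t →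
      (uD s t : Matrix (Fin ℓ → ZMod r) (Fin ℓ → ZMod r) 𝔽)
        = Matrix.diagonal fun ξ => θ ^ (ξ s * ξ t).val)
    (G : Subgroup (Matrix (Fin ℓ → ZMod r) (Fin ℓ → ZMod r) 𝔽)ˣ)
    (hG : G = Subgroup.closure (Set.range uC ∪ Set.range uU ∪
      {x | ∃ s t : Fin ℓ, s < t ∧ x = uD s t}))
    (σ : (Matrix (Fin ℓ → ZMod r) (Fin ℓ → ZMod r) 𝔽)ˣ)
    (hσ : ∀ η ξ, (σ : Matrix (Fin ℓ → ZMod r) (Fin ℓ → ZMod r) 𝔽) η ξ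
      = if η = -ξ then 1 else 0) :
    (∀ g ∈ G, g * σ = σ * g) ∧
      (∀ t, uC t * σ = σ * uC t) ∧ (∀ t, uU t * σ = σ * uU t) ∧
      (∀ s t : Fin ℓ, s < t → uD s t * σ = σ * uD s t) := by
  have hr0 : NeZero r := ⟨(Fact.out : Nat.Prime r).ne_zero⟩
  have hC : ∀ t, uC t * σ = σ * uC t := by
    intro t
    refine weil_aux_comm _ _ hσ fun η ξ => ?_
    rw [huC]
    have h : ∀ i, (η i = -ξ i) = (-η i = ξ i) := fun i => propext neg_eq_iff_eq_neg.symm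
    simp [h]
  have hU : ∀ t, uU t * σ = σ * uU t := by
    intro t
    refine weil_aux_comm _ _ hσ fun η ξ => ?_
    rw [huU, Matrix.diagonal_apply, Matrix.diagonal_apply]
    by_cases h : η = -ξ
    · subst h
      simp [weil_aux_exp hθ.pow_eq_one]
    · rw [if_neg h, if_neg (fun h' => h (neg_eq_iff_eq_neg.mp h'))]
  have hD : ∀ s t : Fin ℓ, s < t → uD s t * σ = σ * uD s t := by
    intro s t hst
    refine weil_aux_comm _ _ hσ fun η ξ => ?_
    rw [huD s t hst, Matrix.diagonal_apply, Matrix.diagonal_apply]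
    by_cases h : η = -ξ
    · subst h
      simp
    · rw [if_neg h, if_neg (fun h' => h (neg_eq_iff_eq_neg.mp h'))]
  refine ⟨?_, hC, hU, hD⟩
  have hle : G ≤ Subgroup.centralizer {σ} := by
    rw [hG, Subgroup.closure_le]
    rintro x ((⟨t, rfl⟩ | ⟨t, rfl⟩) | ⟨s, t, hst, rfl⟩)
    · exact Subgroup.mem_centralizer_singleton_iff.mpr (hC t)
    · exact Subgroup.mem_centralizer_singleton_iff.mpr (hU t)
    · exact Subgroup.mem_centralizer_singleton_iff.mpr (hD s t hst)
  intro g hg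
  exact Subgroup.mem_centralizer_singleton_iff.mp (hle hg)
end

section
/- The abelianization G/[G,G] of the group G is an r-group, i.e., every element of the quotient of G by its commutator subgroup has order a power of r. -/
open Matrix in
/-- one-site operator -/
def weilPhi {r ℓ : ℕ} {𝔽 : Type*} [Field 𝔽] (t : Fin ℓ) (M : Matrix (ZMod r) (ZMod r) 𝔽) :
    Matrix (Fin ℓ → ZMod r) (Fin ℓ → ZMod r) 𝔽 :=
  Matrix.of fun η ξ => if ∀ i, i ≠ t → η i = ξ i then M (η t) (ξ t) else 0

theorem weilPhi_mul {r ℓ : ℕ} [NeZero r] {𝔽 : Type*} [Field 𝔽] (t : Fin ℓ)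
    (M N : Matrix (ZMod r) (ZMod r) 𝔽) :
    weilPhi t (M * N) = weilPhi t M * weilPhi t N := by
  ext η ξ
  simp only [weilPhi, Matrix.of_apply, Matrix.mul_apply]
  rw [← Finset.sum_of_injOn (s := Finset.univ) (fun k : ZMod r => Function.update η t k)
    (f := fun k => if ∀ i, i ≠ t → η i = ξ i then M (η t) k * N k (ξ t) else 0)]
  · split_ifs <;> simp
  · intro a _ b _ h
    have := congrFun h t
    simpa using this
  · intro a _
    simp
  · intro ζ _ hζ
    rw [if_neg, zero_mul]
    intro h
    apply hζ
    refine ⟨ζ t, by simp, ?_⟩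
    funext i
    by_cases hi : i = t
    · subst hi; simp
    · simp [hi, h i hi]
  · intro k _
    have h1 : ∀ i, i ≠ t → η i = Function.update η t k i := by
      intro i hi; simp [hi]
    have h2 : (∀ i, i ≠ t → Function.update η t k i = ξ i) ↔ ∀ i, i ≠ t → η i = ξ i := by
      constructor <;> intro h i hi <;> have := h i hi <;> simpa [hi] using this
    simp only [if_pos h1, h2, Function.update_self]
    split_ifs <;> simp

theorem weilPhi_diagonal {r ℓ : ℕ} [NeZero r] {𝔽 : Type*} [Field 𝔽] (t : Fin ℓ)
    (d : ZMod r → 𝔽) :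
    weilPhi t (Matrix.diagonal d) = Matrix.diagonal fun ξ => d (ξ t) := by
  ext η ξ
  simp only [weilPhi, Matrix.of_apply, Matrix.diagonal_apply]
  by_cases h : η = ξ
  · subst h; simp
  · rw [if_neg h]
    split_ifs with h1 h2
    · exfalso; apply h; funext i
      by_cases hi : i = t
      · subst hi; exact h2
      · exact h1 i hi
    · rfl
    · rfl

theorem weilPhi_smul {r ℓ : ℕ} {𝔽 : Type*} [Field 𝔽] (t : Fin ℓ) (c : 𝔽)
    (M : Matrix (ZMod r) (ZMod r) 𝔽) : weilPhi t (c • M) = c • weilPhi t M := by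
  ext η ξ
  simp [weilPhi]

theorem weil_rel {r : ℕ} [Fact (Nat.Prime r)] {𝔽 : Type*} [Field 𝔽]
    (e : AddChar (ZMod r) 𝔽) (h : ZMod r) (h2 : h * 2 = 1) :
    (Matrix.of fun i j => e (i * j)) * Matrix.diagonal (fun k => e (-(k * k * h))) *
      (Matrix.of fun i j => e (i * j)) =
    (∑ k, e (-(k * k * h))) • (Matrix.diagonal (fun k => e (k * k * h)) *
      (Matrix.of fun i j => e (i * j)) * Matrix.diagonal (fun k => e (k * k * h))) := by
  ext i j
  rw [Matrix.mul_apply]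
  simp only [Matrix.mul_diagonal, Matrix.diagonal_mul, Matrix.smul_apply, Matrix.of_apply,
    smul_eq_mul, ← AddChar.map_add_eq_mul, Finset.sum_mul]
  symm
  refine Fintype.sum_equiv (Equiv.addRight (i + j)) _ _ fun k => ?_
  congr 1
  simp only [Equiv.coe_addRight]
  linear_combination (i * k + j * k + i * j + i * i + j * j) * h2

theorem weil_gauss_neg {r : ℕ} [Fact (Nat.Prime r)] (hr : Odd r) {𝔽 : Type*} [Field 𝔽]
    (e : AddChar (ZMod r) 𝔽) (he : e.IsPrimitive) (h : ZMod r) (h0 : h ≠ 0) :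
    (∑ k, e (k * k * h)) = ((quadraticChar (ZMod r) (-1) : ℤ) : 𝔽) * ∑ k, e (-(k * k * h)) := by
  have hc : ringChar (ZMod r) ≠ 2 := by
    rw [ZMod.ringChar_zmod_n]; rintro rfl; exact absurd hr (by decide)
  have key : ∀ c : ZMod r, c ≠ 0 → ∑ k, e (k * k * c) =
      ∑ a, ((quadraticChar (ZMod r) a : ℤ) : 𝔽) * e (a * c) := by
    intro c hc0
    have h1 : ∑ a : ZMod r, e (a * c) = 0 := by
      have := AddChar.sum_mulShift c he
      simpa [hc0] using this
    have h3 : ∑ k, e (k * k * c) = ∑ a, (((quadraticChar (ZMod r) a : ℤ) : 𝔽) + 1) * e (a * c) := by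
      rw [← Finset.sum_fiberwise (s := Finset.univ) (g := fun k : ZMod r => k ^ 2)]
      refine Finset.sum_congr rfl fun a _ => ?_
      have h4 := quadraticChar_card_sqrts hc a
      have h5 : ((quadraticChar (ZMod r) a : ℤ) : 𝔽) + 1
          = (({x : ZMod r | x ^ 2 = a}.toFinset.card : ℕ) : 𝔽) := by
        have := congrArg (Int.cast : ℤ → 𝔽) h4
        push_cast at this
        exact this.symm
      rw [h5, ← nsmul_eq_mul]
      have h6 : ({x : ZMod r | x ^ 2 = a}.toFinset) = Finset.univ.filter fun k : ZMod r => k ^ 2 = a := by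
        ext; simp
      rw [h6, ← Finset.sum_const]
      refine Finset.sum_congr rfl fun k hk => ?_
      rw [← (Finset.mem_filter.mp hk).2, sq]
    rw [h3]
    simp [add_mul, Finset.sum_add_distrib, h1]
  have k2 := key (-h) (neg_ne_zero.mpr h0)
  simp only [mul_neg] at k2
  rw [key h h0, k2, Finset.mul_sum]
  refine Fintype.sum_equiv (Equiv.neg _) _ _ fun a => ?_
  simp only [Equiv.neg_apply, neg_mul, neg_neg]
  rw [← mul_assoc, ← Int.cast_mul, ← map_mul]
  simp

theorem weil_gauss_mul {r : ℕ} [Fact (Nat.Prime r)] (hr : Odd r) {𝔽 : Type*} [Field 𝔽]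
    (e : AddChar (ZMod r) 𝔽) (he : e.IsPrimitive) (h : ZMod r) (h2 : h * 2 = 1) :
    (∑ k, e (k * k * h)) * (∑ k, e (-(k * k * h))) = (r : 𝔽) := by
  rw [mul_comm, Finset.sum_mul_sum]
  have : ∀ k : ZMod r, ∑ l, e (-(k * k * h)) * e (l * l * h) = ∑ l, e (l * l * h) * e (k * l) := by
    intro k
    symm
    refine Fintype.sum_equiv (Equiv.addRight k) _ _ fun l => ?_
    simp only [Equiv.coe_addRight, ← AddChar.map_add_eq_mul]
    congr 1
    linear_combination (-k * l) * h2
  simp only [this]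
  rw [Finset.sum_comm]
  simp only [← Finset.mul_sum]
  simp only [AddChar.sum_mulShift _ he]
  simp [ZMod.card]

theorem weil_eps {r : ℕ} [Fact (Nat.Prime r)] (hr : Odd r) {𝔽 : Type*} [Field 𝔽]
    (e : AddChar (ZMod r) 𝔽) (he : e.IsPrimitive) (h : ZMod r) (h2 : h * 2 = 1)
    (hD : (Matrix.of fun i j : ZMod r => e (i * j)).det ≠ 0) :
    ((-(r : 𝔽)) ^ ((r - 1) / 2) * (Matrix.of fun i j : ZMod r => e (i * j)).det⁻¹ *
      (∑ k, e (-(k * k * h)))) ^ r = 1 := by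
  have her : ∀ x, e x ^ r = 1 := by
    intro x
    rw [← AddChar.map_nsmul_eq_pow]; simp
  have h0 : h ≠ 0 := by rintro rfl; simp at h2
  have rel := congrArg Matrix.det (weil_rel e h h2)
  have gn := weil_gauss_neg hr e he h h0
  have gm := weil_gauss_mul hr e he h h2
  rw [gn] at gm
  set D := (Matrix.of fun i j : ZMod r => e (i * j)).det
  set g := ∑ k, e (-(k * k * h))
  rw [Matrix.det_smul, Matrix.det_mul, Matrix.det_mul, Matrix.det_mul, Matrix.det_mul,
    Matrix.det_diagonal, Matrix.det_diagonal, ZMod.card] at rel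
  have hv : (∏ k : ZMod r, e (k * k * h)) * (∏ k : ZMod r, e (-(k * k * h))) = 1 := by
    rw [← Finset.prod_mul_distrib]
    refine Finset.prod_eq_one fun k _ => ?_
    rw [← AddChar.map_add_eq_mul]; simp
  have hvr : (∏ k : ZMod r, e (k * k * h)) ^ r = 1 := by
    rw [← Finset.prod_pow]
    exact Finset.prod_eq_one fun k _ => her _
  set v := ∏ k : ZMod r, e (k * k * h)
  set w := ∏ k : ZMod r, e (-(k * k * h))
  change D * w * D = g ^ r * (v * D * v) at rel
  have hDe : D = g ^ r * v ^ 3 := by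
    apply mul_right_cancel₀ hD
    linear_combination v * rel - D * D * hv
  have hm : (-(r : 𝔽)) ^ ((r - 1) / 2) = g ^ (r - 1) := by
    have hq : quadraticChar (ZMod r) (-1) = (-1) ^ ((r - 1) / 2) := by
      have hc : ringChar (ZMod r) ≠ 2 := by
        rw [ZMod.ringChar_zmod_n]; rintro rfl; exact absurd hr (by decide)
      rw [quadraticChar_neg_one hc, ZMod.card, ZMod.χ₄_eq_neg_one_pow (Nat.odd_iff.mp hr)]
      congr 1
      obtain ⟨m, rfl⟩ := hr
      omega
    rw [← gm, hq]
    obtain ⟨m, hm⟩ := hr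
    have e1 : (r - 1) / 2 = m := by omega
    have e2 : r - 1 = 2 * m := by omega
    rw [e1, e2]
    push_cast
    have : (-((-1 : 𝔽) ^ m * g * g)) = (-1) ^ (m + 1) * g ^ 2 := by ring
    rw [this, mul_pow, ← pow_mul, ← pow_mul]
    rw [Even.neg_one_pow (by rw [mul_comm]; exact Nat.even_mul_succ_self m), one_mul]
  have hg : g ≠ 0 := by
    rintro hg
    apply hD
    rw [hDe, hg, zero_pow (NeZero.ne r), zero_mul]
  have hgr : g ^ (r - 1) * g = g ^ r := by
    rw [← pow_succ, Nat.sub_add_cancel (NeZero.one_le)]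
  have hv0 : v ≠ 0 := left_ne_zero_of_mul_eq_one hv
  have : (-(r : 𝔽)) ^ ((r - 1) / 2) * D⁻¹ * g = (v ^ 3)⁻¹ := by
    rw [hm, mul_right_comm, hgr, hDe]
    have := pow_ne_zero r hg
    field_simp
  rw [this, inv_pow, ← pow_mul, mul_comm 3 r, pow_mul, hvr]
  simp

/-- The abelianization `G/[G,G]` is an `r`-group. -/
theorem weil_abelianization_rgroup
    {r : ℕ} [Fact (Nat.Prime r)] (hr : Odd r)
    {𝔽 : Type*} [Field 𝔽] {θ : 𝔽} (hθ : IsPrimitiveRoot θ r)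
    {ℓ : ℕ} (hℓ : 1 ≤ ℓ)
    (Cb : Matrix (ZMod r) (ZMod r) 𝔽)
    (hCb : ∀ i j : ZMod r, Cb i j = θ ^ (i * j).val)
    (lam : 𝔽) (hlam : lam = (-(r : 𝔽)) ^ ((r - 1) / 2) * Cb.det⁻¹)
    (uC uU : Fin ℓ → (Matrix (Fin ℓ → ZMod r) (Fin ℓ → ZMod r) 𝔽)ˣ)
    (uD : Fin ℓ → Fin ℓ → (Matrix (Fin ℓ → ZMod r) (Fin ℓ → ZMod r) 𝔽)ˣ)
    (huC : ∀ t, (uC t : Matrix (Fin ℓ → ZMod r) (Fin ℓ → ZMod r) 𝔽)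
      = lam • Matrix.of fun η ξ =>
          if ∀ i, i ≠ t → η i = ξ i then θ ^ (η t * ξ t).val else 0)
    (huU : ∀ t, (uU t : Matrix (Fin ℓ → ZMod r) (Fin ℓ → ZMod r) 𝔽)
      = Matrix.diagonal fun ξ => θ ^ ((ξ t).val * ((ξ t).val + r) / 2))
    (huD : ∀ s t : Fin ℓ, s < t →
      (uD s t : Matrix (Fin ℓ → ZMod r) (Fin ℓ → ZMod r) 𝔽)
        = Matrix.diagonal fun ξ => θ ^ (ξ s * ξ t).val)
    (G : Subgroup (Matrix (Fin ℓ → ZMod r) (Fin ℓ → ZMod r) 𝔽)ˣ)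
    (hG : G = Subgroup.closure (Set.range uC ∪ Set.range uU ∪
      {x | ∃ s t : Fin ℓ, s < t ∧ x = uD s t})) :
    IsPGroup r (Abelianization ↥G) := by
  classical
  have hθr : θ ^ r = 1 := hθ.pow_eq_one
  let e : AddChar (ZMod r) 𝔽 := AddChar.zmodChar r hθr
  have he : e.IsPrimitive := AddChar.zmodChar_primitive_of_primitive_root r hθ
  have heN : ∀ n : ℕ, θ ^ n = e (n : ZMod r) := fun n => (AddChar.zmodChar_apply' hθr n).symm
  have hev : ∀ x : ZMod r, θ ^ x.val = e x := fun x => (AddChar.zmodChar_apply hθr x).symm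
  have h20 : (2 : ZMod r) ≠ 0 := by
    have : ((2 : ℕ) : ZMod r) ≠ 0 := by
      rw [Ne, ZMod.natCast_eq_zero_iff]
      intro h
      have h3 := (Nat.prime_dvd_prime_iff_eq (Fact.out : r.Prime) Nat.prime_two).mp h
      subst h3
      exact absurd hr (by decide)
    exact_mod_cast this
  obtain ⟨h, h2⟩ : ∃ h : ZMod r, h * 2 = 1 := ⟨2⁻¹, inv_mul_cancel₀ h20⟩
  have hq : ∀ x : ZMod r, θ ^ (x.val * (x.val + r) / 2) = e (x * x * h) := by
    intro x
    rw [heN]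
    congr 1
    have hd : 2 ∣ x.val * (x.val + r) := by
      rw [← even_iff_two_dvd, Nat.even_mul, Nat.even_add]
      have : ¬ Even r := Nat.not_even_iff_odd.mpr hr
      tauto
    obtain ⟨c, hc⟩ := hd
    rw [hc, Nat.mul_div_cancel_left _ (by norm_num)]
    have hc' := congrArg (Nat.cast : ℕ → ZMod r) hc
    push_cast at hc'
    rw [ZMod.natCast_zmod_val, ZMod.natCast_self, add_zero] at hc'
    rw [hc']
    linear_combination (-(c : ZMod r)) * h2
  have hCb' : Cb = Matrix.of fun i j : ZMod r => e (i * j) := by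
    ext i j; rw [hCb, hev]; rfl
  have her : ∀ x, e x ^ r = 1 := by
    intro x
    rw [← AddChar.map_nsmul_eq_pow]; simp
  have huC' : ∀ t, (uC t : Matrix (Fin ℓ → ZMod r) (Fin ℓ → ZMod r) 𝔽) = lam • weilPhi t Cb := by
    intro t
    rw [huC]
    congr 1
    ext η ξ
    simp only [weilPhi, Matrix.of_apply, hCb]
  have huU' : ∀ t, (uU t : Matrix (Fin ℓ → ZMod r) (Fin ℓ → ZMod r) 𝔽)
      = weilPhi t (Matrix.diagonal fun k => e (k * k * h)) := by
    intro t
    rw [huU, weilPhi_diagonal]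
    simp only [hq]
  have hUinv : ∀ t, (((uU t)⁻¹ : (Matrix (Fin ℓ → ZMod r) (Fin ℓ → ZMod r) 𝔽)ˣ) :
      Matrix (Fin ℓ → ZMod r) (Fin ℓ → ZMod r) 𝔽)
      = weilPhi t (Matrix.diagonal fun k => e (-(k * k * h))) := by
    intro t
    rw [Units.inv_eq_of_mul_eq_one_right]
    rw [huU', ← weilPhi_mul, Matrix.diagonal_mul_diagonal, weilPhi_diagonal]
    simp only [← AddChar.map_add_eq_mul]
    simp
  have hlam0 : lam ≠ 0 := by
    intro h0
    have h1 := huC ⟨0, hℓ⟩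
    rw [h0, zero_smul] at h1
    exact (uC ⟨0, hℓ⟩).ne_zero h1
  have hD : (Matrix.of fun i j : ZMod r => e (i * j)).det ≠ 0 := by
    intro h0
    apply hlam0
    rw [hlam, hCb', h0]; simp
  have heps := weil_eps hr e he h h2 hD
  rw [← hCb', ← hlam] at heps
  have hrel := weil_rel e h h2
  rw [← hCb'] at hrel
  set g := ∑ k, e (-(k * k * h))
  have hz : ∀ t, (uC t * (uU t)⁻¹ * uC t * (uU t * uC t * uU t)⁻¹) ^ r = 1 := by
    intro t
    have h1 : ((uC t * (uU t)⁻¹ * uC t : (Matrix (Fin ℓ → ZMod r) (Fin ℓ → ZMod r) 𝔽)ˣ) :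
        Matrix (Fin ℓ → ZMod r) (Fin ℓ → ZMod r) 𝔽) =
        (lam * g) • ((uU t * uC t * uU t : (Matrix (Fin ℓ → ZMod r) (Fin ℓ → ZMod r) 𝔽)ˣ) :
        Matrix (Fin ℓ → ZMod r) (Fin ℓ → ZMod r) 𝔽) := by
      simp only [Units.val_mul, hUinv, huC', huU', ← weilPhi_smul, ← weilPhi_mul]
      simp only [Matrix.smul_mul, Matrix.mul_smul, hrel]
      congr 1
      simp only [smul_smul]
      congr 1
      ring
    apply Units.ext
    rw [Units.val_pow_eq_pow_val, Units.val_mul, h1, Matrix.smul_mul, Units.mul_inv, smul_pow, heps]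
    simp
  subst hG
  set G := Subgroup.closure (Set.range uC ∪ Set.range uU ∪
      {x | ∃ s t : Fin ℓ, s < t ∧ x = uD s t}) with hGdef
  have hUr : ∀ t, (uU t) ^ r = 1 := by
    intro t
    apply Units.ext
    rw [Units.val_pow_eq_pow_val, huU', weilPhi_diagonal, Matrix.diagonal_pow]
    have : (fun ξ : Fin ℓ → ZMod r => e (ξ t * ξ t * h)) ^ r = 1 := by
      funext ξ; simp [her]
    rw [this]; exact Matrix.diagonal_one
  have hDr : ∀ s t, s < t → (uD s t) ^ r = 1 := by
    intro s t hst
    apply Units.ext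
    rw [Units.val_pow_eq_pow_val, huD s t hst, Matrix.diagonal_pow]
    have : (fun ξ : Fin ℓ → ZMod r => θ ^ (ξ s * ξ t).val) ^ r = 1 := by
      funext ξ; simp [hev, her]
    rw [this]; exact Matrix.diagonal_one
  have main : ∀ x (hx : x ∈ G), (Abelianization.of (⟨x, hx⟩ : G)) ^ r = 1 := by
    intro x hx
    induction hx using Subgroup.closure_induction with
    | mem x hx =>
      have hxG : x ∈ G := Subgroup.subset_closure hx
      have aux : ∀ y (hy : y ∈ G), y ^ r = 1 → (Abelianization.of (⟨y, hy⟩ : G)) ^ r = 1 := by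
        intro y hy hyr
        rw [← map_pow]
        have : (⟨y, hy⟩ : G) ^ r = 1 := Subtype.ext (by simpa using hyr)
        rw [this, map_one]
      rcases hx with (⟨t, rfl⟩ | ⟨t, rfl⟩) | ⟨s, t, hst, rfl⟩
      · have hu : uU t ∈ G := Subgroup.subset_closure (Or.inl (Or.inr ⟨t, rfl⟩))
        have hzG : uC t * (uU t)⁻¹ * uC t * (uU t * uC t * uU t)⁻¹ ∈ G :=
          G.mul_mem (G.mul_mem (G.mul_mem hxG (G.inv_mem hu)) hxG)
            (G.inv_mem (G.mul_mem (G.mul_mem hu hxG) hu))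
        have a1 := aux _ hzG (hz t)
        have a2 := aux _ hu (hUr t)
        have a3 : (⟨_, hzG⟩ : G) = ⟨uC t, hxG⟩ * (⟨uU t, hu⟩)⁻¹ * ⟨uC t, hxG⟩ *
          (⟨uU t, hu⟩ * ⟨uC t, hxG⟩ * ⟨uU t, hu⟩)⁻¹ := rfl
        rw [a3] at a1
        simp only [map_mul, map_inv] at a1
        generalize Abelianization.of (⟨uU t, hu⟩ : G) = u at a1 a2
        change (Abelianization.of (⟨uC t, hxG⟩ : G)) ^ r = 1
        generalize Abelianization.of (⟨uC t, hxG⟩ : G) = c at a1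
        have a4 : c * u⁻¹ * c * (u * c * u)⁻¹ = c * (u ^ 3)⁻¹ := by
          rw [mul_inv_eq_iff_eq_mul, mul_assoc c, mul_assoc c]
          congr 1
          rw [eq_inv_mul_iff_mul_eq]
          rw [mul_comm u⁻¹ c, ← mul_assoc, mul_inv_eq_iff_eq_mul, pow_three]
          simp only [mul_comm, mul_left_comm]
        rw [a4, mul_pow, inv_pow, ← pow_mul, mul_comm 3 r, pow_mul, a2] at a1
        simpa using a1
      · exact aux _ _ (hUr t)
      · exact aux _ _ (hDr s t hst)
    | one => 
      have : (⟨1, G.one_mem⟩ : G) = 1 := rfl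
      change (Abelianization.of (⟨1, G.one_mem⟩ : G)) ^ r = 1
      rw [this, map_one, one_pow]
    | mul x y hx hy ihx ihy =>
      have : (⟨x * y, G.mul_mem hx hy⟩ : G) = ⟨x, hx⟩ * ⟨y, hy⟩ := rfl
      change (Abelianization.of (⟨x * y, G.mul_mem hx hy⟩ : G)) ^ r = 1
      rw [this, map_mul, mul_pow, ihx, ihy, one_mul]
    | inv x hx ih =>
      have : (⟨x⁻¹, G.inv_mem hx⟩ : G) = (⟨x, hx⟩)⁻¹ := rfl
      change (Abelianization.of (⟨x⁻¹, G.inv_mem hx⟩ : G)) ^ r = 1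
      rw [this, map_inv, inv_pow, ih, inv_one]
  intro x
  refine ⟨1, ?_⟩
  rw [pow_one]
  obtain ⟨⟨y, hy⟩, rfl⟩ := QuotientGroup.mk_surjective x
  exact main y hy
end

section
/- For all 1 ≤ t ≤ ℓ one has (λ·C_t)⁴ = 1 and (λ·C_t·U_t)³ = 1. -/
section WeilAux
open Matrix

variable {r : ℕ} [Fact (Nat.Prime r)] {𝔽 : Type*} [Field 𝔽]

theorem waux_two (hr : Odd r) : (2 : ZMod r) * 2⁻¹ = 1 := by
  apply mul_inv_cancel₀
  have : ringChar (ZMod r) ≠ 2 := by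
    rw [ZMod.ringChar_zmod_n]
    rintro rfl
    exact absurd hr (by decide)
  exact Ring.two_ne_zero this

theorem waux_sum {ψ : AddChar (ZMod r) 𝔽} (hψ : ψ.IsPrimitive) (b : ZMod r) :
    ∑ x, ψ (x * b) = if b = 0 then (r : 𝔽) else 0 := by
  have := AddChar.sum_mulShift b hψ
  rw [this, ZMod.card]
  split_ifs <;> simp

/-- The quadratic Gauss sum. -/
noncomputable def wauxG (ψ : AddChar (ZMod r) 𝔽) : 𝔽 := ∑ x : ZMod r, ψ (2⁻¹ * x ^ 2)

theorem waux_C4 {ψ : AddChar (ZMod r) 𝔽} (hψ : ψ.IsPrimitive)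
    (M : Matrix (ZMod r) (ZMod r) 𝔽) (hM : ∀ i j, M i j = ψ (i * j)) :
    M ^ 4 = ((r : 𝔽) ^ 2) • (1 : Matrix (ZMod r) (ZMod r) 𝔽) := by
  have h2 : ∀ i k, (M * M) i k = if i + k = 0 then (r : 𝔽) else 0 := by
    intro i k
    rw [Matrix.mul_apply, ← waux_sum hψ]
    refine Finset.sum_congr rfl fun j _ => ?_
    rw [hM, hM, ← AddChar.map_add_eq_mul]
    congr 1; ring
  have : M ^ 4 = (M * M) * (M * M) := by noncomm_ring
  rw [this]
  ext i l
  rw [Matrix.mul_apply, Finset.sum_eq_single (-i)]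
  · rw [h2, h2, Matrix.smul_apply, Matrix.one_apply]
    by_cases h : i = l
    · subst h; simp [sq]
    · have : ¬ (-i + l = 0) := fun h' => h (by linear_combination -h')
      simp [h, this]
  · intro k _ hk
    have : ¬ (i + k = 0) := fun h' => hk (by linear_combination h')
    rw [h2, if_neg this, zero_mul]
  · simp

theorem waux_CU3 (hr : Odd r) {ψ : AddChar (ZMod r) 𝔽} (hψ : ψ.IsPrimitive)
    (A : Matrix (ZMod r) (ZMod r) 𝔽) (hA : ∀ i j, A i j = ψ (i * j + 2⁻¹ * j ^ 2)) :
    A ^ 3 = (wauxG ψ * r) • (1 : Matrix (ZMod r) (ZMod r) 𝔽) := by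
  have h2 := waux_two hr
  have hAA : ∀ i k, (A * A) i k = wauxG ψ * ψ (-(2⁻¹ * i ^ 2) - i * k) := by
    intro i k
    rw [Matrix.mul_apply, wauxG, Finset.sum_mul]
    rw [← Equiv.sum_comp (Equiv.addRight (-(i + k)))]
    refine Finset.sum_congr rfl fun j _ => ?_
    rw [hA, hA, ← AddChar.map_add_eq_mul, ← AddChar.map_add_eq_mul]
    congr 1
    simp only [Equiv.coe_addRight]
    linear_combination -(j * (i + k) - (i + k) ^ 2 + i * k) * h2
  rw [pow_succ, sq]
  ext i l
  rw [Matrix.mul_apply, Matrix.smul_apply, Matrix.one_apply]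
  have : ∀ k, (A * A) i k * A k l = wauxG ψ * ψ (2⁻¹ * l ^ 2 -(2⁻¹ * i ^ 2)) * ψ (k * (l - i)) := by
    intro k
    rw [hAA, hA, mul_assoc, mul_assoc, ← AddChar.map_add_eq_mul, ← AddChar.map_add_eq_mul]
    congr 2; ring
  rw [Finset.sum_congr rfl fun k _ => this k, ← Finset.mul_sum, waux_sum hψ]
  by_cases h : i = l
  · subst h; simp
  · have h' : l - i ≠ 0 := fun h' => h (by linear_combination -h')
    simp [h, h']

theorem waux_GG (hr : Odd r) {ψ : AddChar (ZMod r) 𝔽} (hψ : ψ.IsPrimitive) :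
    wauxG ψ * ∑ x : ZMod r, ψ (-(2⁻¹ * x ^ 2)) = r := by
  have h2 := waux_two hr
  rw [wauxG, Finset.sum_mul_sum, Finset.sum_comm]
  have : ∀ y : ZMod r, ∑ x, ψ (2⁻¹ * x ^ 2) * ψ (-(2⁻¹ * y ^ 2))
      = ∑ d, ψ (2⁻¹ * d ^ 2) * ψ (y * d) := by
    intro y
    rw [← Equiv.sum_comp (Equiv.addRight y)]
    refine Finset.sum_congr rfl fun d _ => ?_
    rw [← AddChar.map_add_eq_mul, ← AddChar.map_add_eq_mul]
    congr 1
    simp only [Equiv.coe_addRight]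
    linear_combination (d * y) * h2
  rw [Finset.sum_congr rfl fun y _ => this y, Finset.sum_comm]
  simp_rw [← Finset.mul_sum, waux_sum hψ]
  simp

theorem waux_sq_sum (hr : Odd r) (f : ZMod r → 𝔽) :
    ∑ x : ZMod r, f (x ^ 2) = ∑ a, ((quadraticChar (ZMod r) a : ℤ) + 1 : 𝔽) * f a := by
  have hc : ringChar (ZMod r) ≠ 2 := by
    rw [ZMod.ringChar_zmod_n]
    rintro rfl
    exact absurd hr (by decide)
  rw [← Finset.sum_fiberwise (s := Finset.univ) (g := fun x : ZMod r => x ^ 2)]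
  refine Finset.sum_congr rfl fun a _ => ?_
  have h1 := quadraticChar_card_sqrts hc a
  have h2 : ((((Finset.univ.filter fun x : ZMod r => x ^ 2 = a).card : ℕ) : ℤ))
      = quadraticChar (ZMod r) a + 1 := by
    rw [← h1]
    congr 2
    ext x; simp
  rw [Finset.sum_congr rfl (g := fun _ => f a), Finset.sum_const, nsmul_eq_mul]
  · congr 1
    exact_mod_cast congrArg (Int.cast : ℤ → 𝔽) h2
  · intro x hx
    simp at hx
    rw [hx]

theorem waux_bar (hr : Odd r) {ψ : AddChar (ZMod r) 𝔽} (hψ : ψ.IsPrimitive) :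
    ∑ x : ZMod r, ψ (-(2⁻¹ * x ^ 2)) = (-1) ^ ((r - 1) / 2) * wauxG ψ := by
  have h2 := waux_two hr
  have h0 : (2 : ZMod r)⁻¹ ≠ 0 := by
    intro h; rw [h, mul_zero] at h2; exact zero_ne_one h2
  have hc : ringChar (ZMod r) ≠ 2 := by
    rw [ZMod.ringChar_zmod_n]
    rintro rfl
    exact absurd hr (by decide)
  have hchi : quadraticChar (ZMod r) (-1) = (-1) ^ ((r - 1) / 2) := by
    rw [quadraticChar_neg_one hc, ZMod.card, ZMod.χ₄_eq_neg_one_pow (Nat.odd_iff.mp hr)]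
    congr 1
    obtain ⟨k, rfl⟩ := hr
    omega
  have hs : ∑ a : ZMod r, ψ (2⁻¹ * a) = 0 := by
    have := waux_sum hψ 2⁻¹
    rw [if_neg h0] at this
    simpa [mul_comm] using this
  have e1 := waux_sq_sum hr (fun a => ψ (-(2⁻¹ * a)))
  have e2 := waux_sq_sum hr (fun a => ψ (2⁻¹ * a))
  rw [wauxG, e2, e1, ← Equiv.sum_comp (Equiv.neg (ZMod r))]
  simp only [Equiv.neg_apply, add_mul, one_mul, Finset.sum_add_distrib, mul_neg, neg_neg, hs,
    add_zero, Finset.mul_sum]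
  refine Finset.sum_congr rfl fun a _ => ?_
  rw [neg_eq_neg_one_mul a, map_mul, hchi]
  push_cast
  ring

theorem waux_lam (m : ℕ) (R G D : 𝔽) (hR : R ≠ 0) (hG : G ^ 2 = (-1) ^ m * R)
    (h4 : D ^ 4 = (R ^ 2) ^ (2 * m + 1)) (h3 : D ^ 3 = (G * R) ^ (2 * m + 1)) :
    ((-R) ^ m * D⁻¹) ^ 4 * R ^ 2 = 1 ∧ ((-R) ^ m * D⁻¹) ^ 3 * (G * R) = 1 := by
  have hs : ((-1 : 𝔽) ^ m) ^ 2 = 1 := by rw [← pow_mul, mul_comm, pow_mul]; simp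
  have hsm : ((-1 : 𝔽) ^ m) ^ m = (-1) ^ m := by
    rcases Nat.even_or_odd m with h | h
    · simp [h.neg_one_pow]
    · simp [h.neg_one_pow]
  have hG0 : G ≠ 0 := by
    rintro rfl
    have : (-1 : 𝔽) ^ m * R ≠ 0 := mul_ne_zero (pow_ne_zero _ (by simp)) hR
    exact this (by rw [← hG]; simp)
  have hGr : G ^ (2 * m + 1) = (-1) ^ m * R ^ m * G := by
    rw [pow_succ, pow_mul, hG, mul_pow, hsm]
  have hD : D = R ^ m * G := by
    have hne : (G * R) ^ (2 * m + 1) ≠ 0 := pow_ne_zero _ (mul_ne_zero hG0 hR)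
    apply mul_left_cancel₀ hne
    rw [← h3, ← pow_succ, h4, h3, mul_pow, hGr]
    have : (R ^ 2) ^ (2 * m + 1) = R ^ (2 * m + 1) * (R ^ m) ^ 2 * R := by ring
    rw [this]
    linear_combination (-(R ^ (2 * m + 1) * (R ^ m) ^ 2 * (-1) ^ m)) * hG
      - (R ^ (2 * m + 1) * (R ^ m) ^ 2 * R) * hs
  have hl : (-R) ^ m * D⁻¹ = (-1) ^ m * G⁻¹ := by
    rw [hD, neg_pow]
    have := pow_ne_zero m hR
    field_simp
  rw [hl]
  generalize (-1 : 𝔽) ^ m = s at *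
  constructor
  · field_simp
    linear_combination - (G ^ 2 + s * R) * hG
      + (s ^ 2 * R ^ 2) * hs
  · field_simp
    linear_combination s * R * hs - hG

/-- Extension of an operator from one tensor factor. -/
noncomputable def wauxPhi (ℓ : ℕ) (t : Fin ℓ) :
    Matrix (ZMod r) (ZMod r) 𝔽 →+* Matrix (Fin ℓ → ZMod r) (Fin ℓ → ZMod r) 𝔽 :=
  ((Matrix.reindexAlgEquiv 𝔽 𝔽 (Equiv.funSplitAt t (ZMod r)).symm).toRingEquiv.toRingHom.comp
    (Matrix.blockDiagonalRingHom (ZMod r) ({j // j ≠ t} → ZMod r) 𝔽)).comp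
    (Pi.constRingHom _ _)

theorem wauxPhi_apply (ℓ : ℕ) (t : Fin ℓ) (M : Matrix (ZMod r) (ZMod r) 𝔽)
    (η ξ : Fin ℓ → ZMod r) :
    wauxPhi ℓ t M η ξ = if ∀ i, i ≠ t → η i = ξ i then M (η t) (ξ t) else 0 := by
  simp [wauxPhi, Matrix.blockDiagonal_apply, funext_iff]

end WeilAux

/-- `(λC_t)⁴ = 1` and `(λC_t·U_t)³ = 1` for all `t`. -/
theorem weil_relations
    {r : ℕ} [Fact (Nat.Prime r)] (hr : Odd r)
    {𝔽 : Type*} [Field 𝔽] {θ : 𝔽} (hθ : IsPrimitiveRoot θ r)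
    {ℓ : ℕ} (hℓ : 1 ≤ ℓ)
    (Cb : Matrix (ZMod r) (ZMod r) 𝔽)
    (hCb : ∀ i j : ZMod r, Cb i j = θ ^ (i * j).val)
    (lam : 𝔽) (hlam : lam = (-(r : 𝔽)) ^ ((r - 1) / 2) * Cb.det⁻¹)
    (C : Fin ℓ → Matrix (Fin ℓ → ZMod r) (Fin ℓ → ZMod r) 𝔽)
    (hC : ∀ t η ξ, C t η ξ =
      if ∀ i, i ≠ t → η i = ξ i then θ ^ (η t * ξ t).val else 0)
    (U : Fin ℓ → Matrix (Fin ℓ → ZMod r) (Fin ℓ → ZMod r) 𝔽)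
    (hU : ∀ t, U t = Matrix.diagonal fun ξ => θ ^ ((ξ t).val * ((ξ t).val + r) / 2)) :
    ∀ t : Fin ℓ, (lam • C t) ^ 4 = 1 ∧ (lam • C t * U t) ^ 3 = 1 := by
  have h2 := waux_two hr
  let ψ : AddChar (ZMod r) 𝔽 := AddChar.zmodChar r hθ.pow_eq_one
  have hψ : ψ.IsPrimitive := AddChar.zmodChar_primitive_of_primitive_root r hθ
  have hψa : ∀ a, ψ a = θ ^ a.val := fun a => AddChar.zmodChar_apply hθ.pow_eq_one a
  have hψn : ∀ n : ℕ, ψ n = θ ^ n := fun n => AddChar.zmodChar_apply' hθ.pow_eq_one n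
  have hu : ∀ j : ZMod r, θ ^ (j.val * (j.val + r) / 2) = ψ (2⁻¹ * j ^ 2) := by
    intro j
    rw [← hψn]
    congr 1
    have he : 2 ∣ j.val * (j.val + r) := by
      rw [← even_iff_two_dvd, Nat.even_mul, Nat.even_add]
      have := Nat.not_even_iff_odd.mpr hr
      tauto
    have h := congrArg (Nat.cast : ℕ → ZMod r) (Nat.mul_div_cancel' he)
    push_cast at h
    rw [ZMod.natCast_zmod_val, ZMod.natCast_self] at h
    generalize ((j.val * (j.val + r) / 2 : ℕ) : ZMod r) = w at *
    linear_combination 2⁻¹ * h - w * h2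
  let Ub : Matrix (ZMod r) (ZMod r) 𝔽 := Matrix.diagonal fun j => ψ (2⁻¹ * j ^ 2)
  have hUb : ∀ i j, Ub i j = if i = j then ψ (2⁻¹ * i ^ 2) else 0 := fun i j =>
    Matrix.diagonal_apply _ i j
  have hM4 := waux_C4 hψ Cb (fun i j => by rw [hCb, hψa])
  have hM3 := waux_CU3 hr hψ (Cb * Ub) (fun i j => by
    rw [Matrix.mul_diagonal, hCb, ← hψa, AddChar.map_add_eq_mul])
  obtain ⟨m, hm⟩ := id hr
  have hm' : (r - 1) / 2 = m := by omega
  have hR : (r : 𝔽) ≠ 0 := by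
    have : NeZero (r : 𝔽) := hθ.neZero'
    exact this.out
  have hG : wauxG ψ ^ 2 = (-1) ^ m * (r : 𝔽) := by
    have h := waux_GG hr hψ
    rw [waux_bar hr hψ, hm'] at h
    have hs : ((-1 : 𝔽) ^ m) ^ 2 = 1 := by rw [← pow_mul, mul_comm, pow_mul]; simp
    linear_combination (-1) ^ m * h - wauxG ψ ^ 2 * hs
  have h4 : Cb.det ^ 4 = ((r : 𝔽) ^ 2) ^ (2 * m + 1) := by
    rw [← Matrix.det_pow, hM4, Matrix.det_smul, ZMod.card, Matrix.det_one, mul_one, ← hm]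
  have hUd : Ub.det ^ 3 = 1 := by
    have h20 : (2 : ZMod r) ≠ 0 := left_ne_zero_of_mul (h2.trans_ne one_ne_zero)
    have hS : ∑ j : ZMod r, (2 * j) ^ 2 = ∑ j : ZMod r, j ^ 2 :=
      Equiv.sum_comp (Equiv.mulLeft₀ (2 : ZMod r) h20) (fun j => j ^ 2)
    simp only [mul_pow, ← Finset.mul_sum] at hS
    have hprod : ∏ j : ZMod r, ψ (2⁻¹ * j ^ 2) = ψ (∑ j : ZMod r, 2⁻¹ * j ^ 2) := by
      induction (Finset.univ : Finset (ZMod r)) using Finset.induction_on with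
      | empty => simp
      | insert a s ha ih =>
        rw [Finset.prod_insert ha, Finset.sum_insert ha, AddChar.map_add_eq_mul, ih]
    rw [Matrix.det_diagonal, hprod, ← AddChar.map_nsmul_eq_pow,
      ← Finset.mul_sum]
    have : 3 • (2⁻¹ * ∑ j : ZMod r, j ^ 2) = 0 := by
      rw [nsmul_eq_mul]
      push_cast
      linear_combination 2⁻¹ * hS
    rw [this, AddChar.map_zero_eq_one]
  have h3 : Cb.det ^ 3 = (wauxG ψ * r) ^ (2 * m + 1) := by
    have := congrArg Matrix.det hM3
    rw [Matrix.det_pow, Matrix.det_mul, mul_pow, hUd, Matrix.det_smul, ZMod.card,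
      Matrix.det_one, mul_one, mul_one] at this
    rw [this, ← hm]
  obtain ⟨l4, l3⟩ := waux_lam m (r : 𝔽) (wauxG ψ) Cb.det hR hG h4 h3
  rw [← hm', ← hlam] at l4 l3
  intro t
  have eC : C t = wauxPhi ℓ t Cb := by
    ext η ξ
    rw [hC, wauxPhi_apply, hCb]
  have eU : U t = wauxPhi ℓ t Ub := by
    ext η ξ
    rw [hU, wauxPhi_apply, Matrix.diagonal_apply, hUb, ← hu]
    by_cases h : η = ξ
    · subst h; simp
    · rw [if_neg h]
      by_cases h1 : ∀ i, i ≠ t → η i = ξ i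
      · rw [if_pos h1, if_neg]
        intro h3
        apply h
        funext i
        by_cases hi : i = t
        · rw [hi, h3]
        · exact h1 i hi
      · rw [if_neg h1]
  have eS : ∀ (c : 𝔽) (M : Matrix (ZMod r) (ZMod r) 𝔽),
      wauxPhi ℓ t (c • M) = c • wauxPhi ℓ t M := by
    intro c M
    ext η ξ
    rw [Matrix.smul_apply, wauxPhi_apply, wauxPhi_apply]
    split_ifs <;> simp
  rw [eC, eU, smul_mul_assoc, smul_pow, smul_pow, ← map_mul, ← map_pow, ← map_pow, hM4, hM3,
    eS, eS, map_one, smul_smul, smul_smul, l4, l3, one_smul]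
  exact ⟨rfl, rfl⟩
end
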